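/- Fix n ≥ 1, k ≥ 1 and N ≥ 1. Let h_k(A_q(x)) denote the complete homogeneous symmetric polynomial of degree k evaluated at the nN variables {q^{2j}x_i : 1 ≤ i ≤ N, 0 ≤ j ≤ n−1}. Then in ℤ[q][x_1,…,x_N] one has h_k(A_q(x)) = Σ_λ q^{mspin(λ)} · 𝒢_λ(x_1,…,x_N;q), where the sum is over all partitions λ of nk with empty n-core and at most n rows, and mspin(λ) denotes the maximum spin of a tiling of λ by n-ribbons. -/

import Mathlib

/-!
The identity is proved by a weight-preserving bijection between pairs `(λ, T)`, with `T` a ribbon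
tableau of shape `λ`, and multisets of `k` letters `(i, b)`, where `1 ≤ i ≤ N` and `0 ≤ b < n`. The
bijection sends `T` to the multiset of the pairs (entry of `R`, index `bot R` of the bottom row of
`R`) over the ribbons `R` of `T` (`letters`).

**Adding one ribbon.** A ribbon is a lattice path that goes right and up (`exists_path`). Attach to
row `i` of a partition the bead `λ_i - i`; adding an `n`-ribbon moves one bead up by `n`. Hence a
partition with at most `n` rows and empty `n`-core has its `n` beads on distinct residue classes
modulo `n` (`Good`), and to such a partition exactly one ribbon can be added with its bottom row at
any prescribed `b < n` (`add_exists`, `add_unique`).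

**Strips.** The ribbons of a horizontal strip over `μ` can be added one at a time in order of
decreasing bottom row (`inner_peel`). Conversely, ribbons added in this order form a horizontal
strip. So the horizontal strips over a good `μ` correspond to the multisets of rows in
`{0, …, n - 1}` (`strip_exists`, `strip_unique`), and iterating over the letters gives the bijection
(`letters_injective`, `letters_surjective`).

**Weights.** A sum over pairs of beads (`energy`) increases by `2 (2 bot R - spin R)` when the ribbon
`R` is added (`energy_step`). Therefore `∑ (2 bot R - spin R)` is the same for all tilings of a good
`λ` (`tiling_energy`). As `spin R ≤ bot R`, with equality if `R` reaches the top row, and as ribbons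
reaching the top row can be removed until nothing is left (`remove_exists`), this common value is the
maximal spin (`two_maxSpin`). Consequently the maximal spin of `λ` plus the spin of `T` is
`∑ 2 bot R` (`tableau_spin`), the exponent of `q` in the product of the letters `q^{2b} x_i`.
-/

open scoped Classical

noncomputable section

/-- A cell of a Young/skew diagram: (row, column). -/
abbrev Cell : Type := ℕ × ℕ

/-- Two cells are adjacent if they share an edge. -/
def Adj (a b : Cell) : Prop :=
  (a.1 = b.1 ∧ (a.2 + 1 = b.2 ∨ b.2 + 1 = a.2)) ∨
  (a.2 = b.2 ∧ (a.1 + 1 = b.1 ∨ b.1 + 1 = a.1))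

/-- Reachability inside a finite set of cells via edge-adjacency. -/
def Reach (S : Finset Cell) (a b : Cell) : Prop :=
  Relation.ReflTransGen (fun x y => y ∈ S ∧ Adj x y) a b

/-- A set of cells is connected if any two of its cells are joined by a path inside it. -/
def CellsConnected (S : Finset Cell) : Prop :=
  ∀ a ∈ S, ∀ b ∈ S, Reach S a b

/-- The connected component of the cell `c` inside `S`. -/
def component (S : Finset Cell) (c : Cell) : Finset Cell :=
  S.filter (fun d => Reach S c d)

/-- The number of connected components of a set of cells. -/
def numComponents (S : Finset Cell) : ℕ :=
  (S.image (fun c => component S c)).card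

/-- `S` contains no 2 × 2 square of cells. -/
def NoSquare (S : Finset Cell) : Prop :=
  ¬ ∃ i j : ℕ, (i, j) ∈ S ∧ (i + 1, j) ∈ S ∧ (i, j + 1) ∈ S ∧ (i + 1, j + 1) ∈ S

/-- `S` is (the set of cells of) a skew shape `λ/μ`. -/
def IsSkewCells (S : Finset Cell) : Prop :=
  ∃ lam mu : YoungDiagram, mu ≤ lam ∧ S = lam.cells \ mu.cells

/-- An `n`-ribbon: a connected skew shape with `n` cells and no 2 × 2 square. -/
def IsRibbon (n : ℕ) (S : Finset Cell) : Prop :=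
  S.card = n ∧ CellsConnected S ∧ NoSquare S ∧ IsSkewCells S

/-- The spin of a ribbon: the number of rows it occupies, minus 1. -/
def ribbonSpin (S : Finset Cell) : ℕ := (S.image Prod.fst).card - 1

/-- `T` is a tiling of the cell set `S` by `n`-ribbons. -/
def IsTilingOf (n : ℕ) (S : Finset Cell) (T : Finset (Finset Cell)) : Prop :=
  (∀ R ∈ T, IsRibbon n R) ∧
  ((T : Set (Finset Cell)).Pairwise fun A B => Disjoint A B) ∧
  T.biUnion id = S

/-- `S` can be tiled by `n`-ribbons. -/
def Tileable (n : ℕ) (S : Finset Cell) : Prop := ∃ T, IsTilingOf n S T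

/-- Total spin of a tiling. -/
def tilingSpin (T : Finset (Finset Cell)) : ℕ := ∑ R ∈ T, ribbonSpin R

/-- The maximum spin of an `n`-ribbon tiling of `S`. -/
def maxSpin (n : ℕ) (S : Finset Cell) : ℕ :=
  sSup {m : ℕ | ∃ T, IsTilingOf n S T ∧ tilingSpin T = m}

/-- `c` is the topright-most cell of `R`: maximal column and, among those, minimal row. -/
def TopRightCell (R : Finset Cell) (c : Cell) : Prop :=
  c ∈ R ∧ ∀ d ∈ R, d.2 ≤ c.2 ∧ (d.2 = c.2 → c.1 ≤ d.1)

/-- Every ribbon of the tiling `T` has its topright-most cell touching the northern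
edge of the shape `S`: the cell directly above it is not in `S`. -/
def NorthernCond (S : Finset Cell) (T : Finset (Finset Cell)) : Prop :=
  ∀ R ∈ T, ∀ c : Cell, TopRightCell R c → (c.1 = 0 ∨ (c.1 - 1, c.2) ∉ S)

/-- `T` is a tiling of `S` witnessing that `S` is a horizontal `n`-ribbon strip. -/
def IsHStripTiling (n : ℕ) (S : Finset Cell) (T : Finset (Finset Cell)) : Prop :=
  IsTilingOf n S T ∧ NorthernCond S T

/-- `S` is a horizontal `n`-ribbon strip. -/
def IsHStripCells (n : ℕ) (S : Finset Cell) : Prop :=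
  IsSkewCells S ∧ ∃ T, IsHStripTiling n S T

/-- The spin of a horizontal `n`-ribbon strip (via its tiling, which is unique when it exists). -/
def stripSpin (n : ℕ) (S : Finset Cell) : ℕ :=
  if h : ∃ T, IsHStripTiling n S T then tilingSpin h.choose else 0

/-- Conjugate (transpose) of a set of cells. -/
def swapCells (S : Finset Cell) : Finset Cell := S.image Prod.swap

/-- `S` is a vertical `n`-ribbon strip: its conjugate is a horizontal one. -/
def IsVStripCells (n : ℕ) (S : Finset Cell) : Prop :=
  IsHStripCells n (swapCells S)

/-- The spin of a vertical `n`-ribbon strip with `k = |S|/n` ribbons: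
`k (n-1)` minus the spin of the conjugate strip. -/
def vStripSpin (n : ℕ) (S : Finset Cell) : ℕ :=
  (S.card / n) * (n - 1) - stripSpin n (swapCells S)

/-- `T` is a tiling of `S` witnessing that `S` is a vertical `n`-ribbon strip. -/
def IsVStripTiling (n : ℕ) (S : Finset Cell) (T : Finset (Finset Cell)) : Prop :=
  IsHStripTiling n (swapCells S) (T.image swapCells)

/-- `mu` is obtained from `lam` by removing a single `n`-ribbon. -/
def RibbonStep (n : ℕ) (lam mu : YoungDiagram) : Prop :=
  mu ≤ lam ∧ IsRibbon n (lam.cells \ mu.cells)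

/-- `delta` is the `n`-core of `lam`: it is obtained from `lam` by successively removing
`n`-ribbons, and no further `n`-ribbon can be removed from it. -/
def IsNCoreOf (n : ℕ) (delta lam : YoungDiagram) : Prop :=
  Relation.ReflTransGen (RibbonStep n) lam delta ∧ ∀ mu, ¬ RibbonStep n delta mu

/-- The `n`-core of a partition (defined via choice; it exists and is unique). -/
def nCore (n : ℕ) (lam : YoungDiagram) : YoungDiagram :=
  if h : ∃ d, IsNCoreOf n d lam then h.choose else lam

/-- A semistandard `n`-ribbon tableau of shape `lam/mu` with entries in `{1, …, N}`:
a chain of partitions `mu = μ⁰ ⊆ μ¹ ⊆ ⋯ ⊆ μᴺ = lam` where each `μⁱ/μ^{i-1}` is a (possibly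
empty) horizontal `n`-ribbon strip, together with the (unique) tiling of each strip. -/
structure RibbonTableau (n N : ℕ) (lam mu : YoungDiagram) where
  chain : Fin (N + 1) → YoungDiagram
  chain_zero : chain 0 = mu
  chain_last : chain (Fin.last N) = lam
  chain_mono : ∀ i : Fin N, chain i.castSucc ≤ chain i.succ
  tiling : Fin N → Finset (Finset Cell)
  tiling_strip : ∀ i : Fin N,
    IsHStripTiling n ((chain i.succ).cells \ (chain i.castSucc).cells) (tiling i)

/-- The spin of a ribbon tableau. -/
def RibbonTableau.spin {n N : ℕ} {lam mu : YoungDiagram} (T : RibbonTableau n N lam mu) : ℕ :=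
  ∑ i : Fin N, tilingSpin (T.tiling i)

/-- A standard ribbon tableau: each letter occurs exactly once. -/
def RibbonTableau.IsStandard {n N : ℕ} {lam mu : YoungDiagram}
    (T : RibbonTableau n N lam mu) : Prop :=
  ∀ i : Fin N, (T.tiling i).card = 1

/-- The monomial `q^{spin T} x^{weight T}` attached to a ribbon tableau. -/
def tableauTerm {n N : ℕ} {lam mu : YoungDiagram} (T : RibbonTableau n N lam mu) :
    MvPolynomial (Fin N) (Polynomial ℤ) :=
  MvPolynomial.C (Polynomial.X ^ T.spin) *
    ∏ i : Fin N, MvPolynomial.X i ^ (T.tiling i).card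

/-- The ribbon function `𝒢_{lam/mu}(x₁, …, x_N; q)`. -/
def ribbonFn (n N : ℕ) (lam mu : YoungDiagram) : MvPolynomial (Fin N) (Polynomial ℤ) :=
  ∑ᶠ T : RibbonTableau n N lam mu, tableauTerm T

/-- `𝒢_lam = 𝒢_{lam/(n-core of lam)}`. -/
def G (n N : ℕ) (lam : YoungDiagram) : MvPolynomial (Fin N) (Polynomial ℤ) :=
  ribbonFn n N lam (nCore n lam)

/-- The Schur polynomial `s_ν(x₁,…,x_N)`, realized as the `n = 1` ribbon function
(1-ribbon tableaux are exactly semistandard Young tableaux, and all spins are 0). -/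
def schurPoly (N : ℕ) (nu : YoungDiagram) : MvPolynomial (Fin N) (Polynomial ℤ) :=
  ribbonFn 1 N nu ⊥

/-- The cells of the `i`-th horizontal strip of a decomposition. -/
def stripCells {len : ℕ} (strip : Fin len → Finset (Finset Cell)) (i : Fin len) : Finset Cell :=
  (strip i).biUnion id

/-- The cells of `lam` together with the strips up to (and including) `i`. -/
def partialCells {len : ℕ} (strip : Fin len → Finset (Finset Cell)) (lam : YoungDiagram)
    (i : Fin len) : Finset Cell :=
  lam.cells ∪ (Finset.univ.filter (fun j => j ≤ i)).biUnion (fun j => stripCells strip j)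

/-- The union of the cells of the strips strictly before `i`. -/
def prevCells {len : ℕ} (strip : Fin len → Finset (Finset Cell)) (i : Fin len) : Finset Cell :=
  (Finset.univ.filter (fun j => j < i)).biUnion (fun j => stripCells strip j)

/-- Two cell sets touch if some cell of one is adjacent to some cell of the other. -/
def Touches (A B : Finset Cell) : Prop :=
  ∃ a ∈ A, ∃ b ∈ B, Adj a b

/-- `R` is the rightmost ribbon within the cell set `C`. -/
def IsRightmostIn (R C : Finset Cell) : Prop :=
  ∃ c ∈ R, ∀ d ∈ C, d.2 ≤ c.2

/-- A border `n`-ribbon strip of shape `mu/lam`: the connected skew shape `mu/lam` with a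
distinguished decomposition into disjoint non-empty horizontal `n`-ribbon strips
`T₁, …, T_len` (each recorded by its tiling) such that each partial union is a skew shape,
`T₁` is connected, and for `i ≥ 2` every connected component `C` of `Tᵢ` is such that
`C ∪ (T₁ ∪ ⋯ ∪ T_{i-1})` is not a horizontal `n`-ribbon strip and only the rightmost
ribbon of `C` touches `T₁ ∪ ⋯ ∪ T_{i-1}`. -/
structure BorderRibbonStrip (n : ℕ) (lam mu : YoungDiagram) where
  len : ℕ
  len_pos : 1 ≤ len
  strip : Fin len → Finset (Finset Cell)
  sub : lam ≤ mu
  connected : CellsConnected (mu.cells \ lam.cells)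
  nonempty : ∀ i, (strip i).Nonempty
  disj : ∀ i j, i ≠ j → Disjoint (stripCells strip i) (stripCells strip j)
  cover : Finset.univ.biUnion (fun i => stripCells strip i) = mu.cells \ lam.cells
  shape : ∀ i, ∃ nu : YoungDiagram, nu.cells = partialCells strip lam i
  hstrips : ∀ i, IsHStripTiling n (stripCells strip i) (strip i)
  first_connected : CellsConnected (stripCells strip ⟨0, len_pos⟩)
  comp_cond : ∀ i : Fin len, 0 < (i : ℕ) → ∀ c ∈ stripCells strip i,
    (¬ IsHStripCells n (component (stripCells strip i) c ∪ prevCells strip i)) ∧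
    (∀ R ∈ strip i, R ⊆ component (stripCells strip i) c →
      Touches R (prevCells strip i) → IsRightmostIn R (component (stripCells strip i) c))

/-- The height of a border ribbon strip: total number of connected components of its
horizontal strips, minus 1. -/
def BorderRibbonStrip.height {n : ℕ} {lam mu : YoungDiagram}
    (S : BorderRibbonStrip n lam mu) : ℕ :=
  (∑ i : Fin S.len, numComponents (stripCells S.strip i)) - 1

/-- The spin of a border ribbon strip. -/
def BorderRibbonStrip.spin {n : ℕ} {lam mu : YoungDiagram}
    (S : BorderRibbonStrip n lam mu) : ℕ :=
  ∑ i : Fin S.len, tilingSpin (S.strip i)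

/-- The size (number of ribbons) of a border ribbon strip. -/
def BorderRibbonStrip.size {n : ℕ} {lam mu : YoungDiagram}
    (S : BorderRibbonStrip n lam mu) : ℕ :=
  ∑ i : Fin S.len, (S.strip i).card

/-- `𝒳^{mu/lam}_k(q) = Σ_S (-1)^{h(S)} q^{s(S)}` over border `n`-ribbon strips of shape
`mu/lam` with `k` ribbons. -/
def chiX (n k : ℕ) (lam mu : YoungDiagram) : Polynomial ℤ :=
  ∑ᶠ S : BorderRibbonStrip n lam mu,
    if S.size = k then (-1) ^ S.height * Polynomial.X ^ S.spin else 0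

/-- The complete homogeneous symmetric polynomial of degree `k` evaluated at the family `v`. -/
def hPoly {ι R : Type*} [Fintype ι] [DecidableEq ι] [CommSemiring R] (k : ℕ) (v : ι → R) : R :=
  ∑ d : Sym ι k, ((d : Multiset ι).map v).prod

/-- The elementary symmetric polynomial of degree `k` evaluated at the family `v`. -/
def ePoly {ι R : Type*} [Fintype ι] [DecidableEq ι] [CommSemiring R] (k : ℕ) (v : ι → R) : R :=
  ∑ s ∈ Finset.univ.powersetCard k, ∏ i ∈ s, v i

/-- The alphabet `A_q(x) = {q^{2j} x_i : 1 ≤ i ≤ N, 0 ≤ j ≤ n-1}`. -/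
def alphabetVal (n N : ℕ) : Fin N × Fin n → MvPolynomial (Fin N) (Polynomial ℤ) :=
  fun p => MvPolynomial.C (Polynomial.X ^ (2 * (p.2 : ℕ))) * MvPolynomial.X p.1

/-- The Schur function `s_lam` evaluated at the alphabet `A_q(x)`,
i.e. the plethysm `s_lam[(1+q²+⋯+q^{2n-2})X]` in `N` variables. -/
def schurAlph (n N : ℕ) (lam : YoungDiagram) : MvPolynomial (Fin N) (Polynomial ℤ) :=
  MvPolynomial.aeval
    (fun t : Fin (n * N) => alphabetVal n N (Prod.swap (finProdFinEquiv.symm t)))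
    (schurPoly (n * N) lam)

end

/-! ### Ribbons as lattice paths -/

namespace RibbonProof

/-- The content `column - row` of a cell. -/
def ct (c : Cell) : ℤ := (c.2 : ℤ) - (c.1 : ℤ)

/-- `b` is the cell immediately to the right of, or immediately above, the cell `a`. -/
def NE (a b : Cell) : Prop :=
  (b.1 = a.1 ∧ b.2 = a.2 + 1) ∨ (a.1 = b.1 + 1 ∧ b.2 = a.2)

/-- `c 0, …, c (n - 1)` enumerates the cells of `R` by increasing content, each step going one cell
to the right or one cell up. Thus `c 0` is the tail of the ribbon `R` (in its bottom row) and
`c (n - 1)` its head. Values `c m` with `n ≤ m` are irrelevant. -/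
def IsPath (n : ℕ) (R : Finset Cell) (c : ℕ → Cell) : Prop :=
  R = (Finset.range n).image c ∧ ∀ m, m + 1 < n → NE (c m) (c (m + 1))

/-- The index of the bottom row of a set of cells. -/
def bot (R : Finset Cell) : ℕ := R.sup Prod.fst

lemma mem_cells_iff {lam : YoungDiagram} {i j : ℕ} : (i, j) ∈ lam.cells ↔ j < lam.rowLen i := by
  rw [YoungDiagram.mem_cells, YoungDiagram.mem_iff_lt_rowLen]

lemma rowLen_le_of_le {mu lam : YoungDiagram} (h : mu ≤ lam) (i : ℕ) :
    mu.rowLen i ≤ lam.rowLen i := by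
  by_contra hlt
  push Not at hlt
  have h1 : (i, lam.rowLen i) ∈ mu.cells := mem_cells_iff.2 hlt
  have h2 := YoungDiagram.cells_subset_iff.2 h h1
  rw [mem_cells_iff] at h2
  omega

lemma ext_rowLen {mu lam : YoungDiagram} (h : ∀ i, mu.rowLen i = lam.rowLen i) : mu = lam := by
  apply YoungDiagram.ext
  ext ⟨i, j⟩
  rw [mem_cells_iff, mem_cells_iff, h]

lemma mem_sdiff_iff {mu lam : YoungDiagram} {i j : ℕ} :
    (i, j) ∈ lam.cells \ mu.cells ↔ mu.rowLen i ≤ j ∧ j < lam.rowLen i := by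
  rw [Finset.mem_sdiff, mem_cells_iff, mem_cells_iff]; omega

section Path

variable {n : ℕ} {R : Finset Cell} {c : ℕ → Cell}

lemma IsPath.mem (h : IsPath n R c) {m : ℕ} (hm : m < n) : c m ∈ R := by
  rw [h.1]; exact Finset.mem_image_of_mem _ (Finset.mem_range.2 hm)

lemma IsPath.exists (h : IsPath n R c) {x : Cell} (hx : x ∈ R) : ∃ m < n, c m = x := by
  rw [h.1] at hx
  simpa using hx

lemma IsPath.ct_eq (h : IsPath n R c) {m : ℕ} (hm : m < n) : ct (c m) = ct (c 0) + m := by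
  induction m with
  | zero => simp
  | succ m ih =>
    have := ih (by omega)
    have h2 := h.2 m hm
    unfold NE at h2
    unfold ct at *
    push_cast
    omega

/-- A path meets every diagonal at most once. -/
lemma IsPath.ct_inj (h : IsPath n R c) {x y : Cell} (hx : x ∈ R) (hy : y ∈ R)
    (hxy : ct x = ct y) : x = y := by
  obtain ⟨m, hm, rfl⟩ := h.exists hx
  obtain ⟨l, hl, rfl⟩ := h.exists hy
  rw [h.ct_eq hm, h.ct_eq hl] at hxy
  have : m = l := by omega
  rw [this]

lemma IsPath.mono (h : IsPath n R c) {m l : ℕ} (hml : m ≤ l) (hl : l < n) :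
    (c l).1 ≤ (c m).1 ∧ (c m).2 ≤ (c l).2 := by
  induction l, hml using Nat.le_induction with
  | base => simp
  | succ l hml ih =>
    have := ih (by omega)
    have h2 := h.2 l hl
    unfold NE at h2
    omega

lemma IsPath.ct_bounds (h : IsPath n R c) {x : Cell} (hx : x ∈ R) :
    ct (c 0) ≤ ct x ∧ ct x < ct (c 0) + n := by
  obtain ⟨m, hm, rfl⟩ := h.exists hx
  rw [h.ct_eq hm]; omega

lemma IsPath.row_bounds (h : IsPath n R c) {x : Cell} (hx : x ∈ R) :
    (c (n - 1)).1 ≤ x.1 ∧ x.1 ≤ (c 0).1 := by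
  obtain ⟨m, hm, rfl⟩ := h.exists hx
  exact ⟨(h.mono (m := m) (l := n - 1) (by omega) (by omega)).1,
    (h.mono (m := 0) (l := m) (by omega) hm).1⟩

/-- Every row strictly between the head row (inclusive) and the tail row (exclusive) is entered by
an upward step. -/
lemma IsPath.exists_up (h : IsPath n R c) (hn : 1 ≤ n) {i : ℕ} (hi : (c (n - 1)).1 ≤ i)
    (hi' : i < (c 0).1) :
    ∃ m, m + 1 < n ∧ (c m).1 = i + 1 ∧ (c (m + 1)).1 = i ∧ (c m).2 = (c (m + 1)).2 := by
  have hex : ∃ m, m < n ∧ (c m).1 ≤ i := ⟨n - 1, by omega, hi⟩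
  obtain ⟨hm, hmi⟩ := Nat.find_spec hex
  rcases hfind : Nat.find hex with _ | m
  · rw [hfind] at hmi; omega
  · rw [hfind] at hm hmi
    have hmin := Nat.find_min hex (m := m) (by omega)
    push Not at hmin
    have h1 := hmin (by omega)
    have h2 := h.2 m hm
    unfold NE at h2
    exact ⟨m, hm, by omega, by omega, by omega⟩

lemma IsPath.bot_eq (h : IsPath n R c) (hn : 1 ≤ n) : bot R = (c 0).1 := by
  apply le_antisymm
  · exact Finset.sup_le fun x hx => (h.row_bounds hx).2
  · exact Finset.le_sup (f := Prod.fst) (h.mem (by omega))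

lemma IsPath.spin_eq (h : IsPath n R c) (hn : 1 ≤ n) :
    ribbonSpin R + (c (n - 1)).1 = (c 0).1 := by
  have hle := (h.mono (m := 0) (l := n - 1) (by omega) (by omega)).1
  have : R.image Prod.fst = Finset.Icc (c (n - 1)).1 (c 0).1 := by
    ext i
    simp only [Finset.mem_image, Finset.mem_Icc]
    constructor
    · rintro ⟨x, hx, rfl⟩; exact h.row_bounds hx
    · rintro ⟨h1, h2⟩
      rcases Nat.lt_or_eq_of_le h2 with h2 | h2
      · obtain ⟨m, hm, _, h4, _⟩ := h.exists_up hn h1 h2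
        exact ⟨_, h.mem hm, h4⟩
      · exact ⟨_, h.mem (m := 0) (by omega), h2.symm⟩
  unfold ribbonSpin
  rw [this, Nat.card_Icc]
  omega

lemma IsPath.spin_le_bot (h : IsPath n R c) (hn : 1 ≤ n) : ribbonSpin R ≤ bot R := by
  have := h.spin_eq hn
  have := h.bot_eq hn
  omega

lemma IsPath.topRight (h : IsPath n R c) (hn : 1 ≤ n) : TopRightCell R (c (n - 1)) := by
  refine ⟨h.mem (by omega), fun d hd => ?_⟩
  obtain ⟨m, hm, rfl⟩ := h.exists hd
  have := h.mono (m := m) (l := n - 1) (by omega) (by omega)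
  exact ⟨this.2, fun _ => this.1⟩

lemma IsPath.topRight_unique (h : IsPath n R c) (hn : 1 ≤ n) {x : Cell} (hx : TopRightCell R x) :
    x = c (n - 1) := by
  have h1 := h.topRight hn
  have h2 := hx.2 _ h1.1
  have h3 := h1.2 _ hx.1
  have h4 : x.2 = (c (n - 1)).2 := by omega
  exact Prod.ext (by have := h2.2 h4.symm; have := h3.2 h4; omega) h4

end Path

lemma adj_symm {a b : Cell} (h : Adj a b) : Adj b a := by
  unfold Adj at *; omega

lemma NE.adj {a b : Cell} (h : NE a b) : Adj a b := by
  unfold Adj; unfold NE at h; omega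

/-- A walk inside `S` from a diagonal `≤ d` to a diagonal `> d` makes a step from diagonal `d` to
diagonal `d + 1`, and such a step goes right or up. -/
lemma reach_crossing {S : Finset Cell} {a b : Cell} (h : Reach S a b) (ha : a ∈ S) {d : ℤ}
    (had : ct a ≤ d) (hbd : d < ct b) :
    ∃ u ∈ S, ∃ v ∈ S, ct u = d ∧ ct v = d + 1 ∧ NE u v := by
  have key : b ∈ S ∧ (d < ct b → ∃ u ∈ S, ∃ v ∈ S, ct u = d ∧ ct v = d + 1 ∧ NE u v) := by
    clear hbd
    induction h with
    | refl => exact ⟨ha, fun h => by omega⟩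
    | @tail x y _ hxy ih =>
      refine ⟨hxy.1, fun hy => ?_⟩
      by_cases hx : d < ct x
      · exact ih.2 hx
      · have hadj := hxy.2
        refine ⟨x, ih.1, y, hxy.1, ?_⟩
        unfold Adj at hadj
        unfold NE
        unfold ct at *
        omega
  exact key.2 hbd

/-- A skew shape without `2 × 2` squares meets every diagonal at most once. -/
lemma ct_inj_of_skew {S : Finset Cell} (hS : IsSkewCells S) (hq : NoSquare S) {x y : Cell}
    (hx : x ∈ S) (hy : y ∈ S) (hxy : ct x = ct y) : x = y := by
  obtain ⟨lam, mu, hle, rfl⟩ := hS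
  have main : ∀ x ∈ lam.cells \ mu.cells, ∀ y ∈ lam.cells \ mu.cells, ct x = ct y →
      ¬ x.1 < y.1 := by
    rintro ⟨i, j⟩ hx ⟨k, l⟩ hy hxy hlt
    simp only [ct] at hxy hlt
    apply hq
    refine ⟨i, j, hx, ?_⟩
    rw [mem_sdiff_iff] at *
    rw [mem_sdiff_iff, mem_sdiff_iff]
    have h1 := lam.rowLen_anti i (i + 1) (by omega)
    have h2 := lam.rowLen_anti (i + 1) k (by omega)
    have h3 := mu.rowLen_anti i (i + 1) (by omega)
    omega
  have h1 := main x hx y hy hxy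
  have h2 := main y hy x hx hxy.symm
  unfold ct at hxy
  exact Prod.ext (by omega) (by omega)

lemma exists_path {n : ℕ} (hn : 1 ≤ n) {R : Finset Cell} (h : IsRibbon n R) :
    ∃ c, IsPath n R c := by
  obtain ⟨hcard, hconn, hsq, hskew⟩ := h
  have hne : R.Nonempty := Finset.card_pos.1 (by omega)
  obtain ⟨a, ha, hamin⟩ := R.exists_min_image ct hne
  obtain ⟨b, hb, hbmax⟩ := R.exists_max_image ct hne
  have hab := hamin b hb
  have himg : R.image ct = Finset.Icc (ct a) (ct b) := by
    ext d
    simp only [Finset.mem_image, Finset.mem_Icc]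
    constructor
    · rintro ⟨x, hx, rfl⟩; exact ⟨hamin x hx, hbmax x hx⟩
    · rintro ⟨h1, h2⟩
      rcases lt_or_eq_of_le h2 with h2 | h2
      · obtain ⟨u, hu, _, _, hud, _⟩ := reach_crossing (hconn a ha b hb) ha h1 h2
        exact ⟨u, hu, hud⟩
      · exact ⟨b, hb, h2.symm⟩
  have hc2 : (R.image ct).card = n := by
    rw [Finset.card_image_of_injOn, hcard]
    intro x hx y hy hxy
    exact ct_inj_of_skew hskew hsq hx hy hxy
  rw [himg, Int.card_Icc] at hc2
  have hex : ∀ m : ℕ, ∃ x : Cell, m < n → x ∈ R ∧ ct x = ct a + m := by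
    intro m
    by_cases hm : m < n
    · have : ct a + m ∈ R.image ct := by rw [himg, Finset.mem_Icc]; omega
      obtain ⟨x, hx, hxm⟩ := Finset.mem_image.1 this
      exact ⟨x, fun _ => ⟨hx, hxm⟩⟩
    · exact ⟨a, fun h => absurd h hm⟩
  choose c hc using hex
  refine ⟨c, ?_, ?_⟩
  · ext x
    simp only [Finset.mem_image, Finset.mem_range]
    constructor
    · intro hx
      have h1 : ct x ∈ R.image ct := Finset.mem_image_of_mem _ hx
      rw [himg, Finset.mem_Icc] at h1
      have h2 : (ct x - ct a).toNat < n := by omega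
      refine ⟨(ct x - ct a).toNat, h2, ?_⟩
      have := hc _ h2
      exact ct_inj_of_skew hskew hsq this.1 hx (by rw [this.2]; omega)
    · rintro ⟨m, hm, rfl⟩; exact (hc m hm).1
  · intro m hm
    have h1 := hc m (by omega)
    have h2 := hc (m + 1) hm
    obtain ⟨u, hu, v, hv, hud, hvd, huv⟩ :=
      reach_crossing (hconn _ h1.1 _ h2.1) h1.1 le_rfl (by rw [h1.2, h2.2]; push_cast; omega)
    have e1 := ct_inj_of_skew hskew hsq hu h1.1 hud
    have e2 := ct_inj_of_skew hskew hsq hv h2.1 (by rw [hvd, h1.2, h2.2]; push_cast; ring)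
    rwa [e1, e2] at huv

/-- Conversely, a path which is a skew shape is a ribbon. -/
lemma IsPath.isRibbon {n : ℕ} {R : Finset Cell} {c : ℕ → Cell} (h : IsPath n R c)
    (hskew : IsSkewCells R) : IsRibbon n R := by
  refine ⟨?_, ?_, ?_, hskew⟩
  · rw [h.1, Finset.card_image_of_injOn, Finset.card_range]
    intro m hm l hl hml
    simp only [Finset.coe_range, Set.mem_Iio] at hm hl
    have := congrArg ct hml
    simp only [h.ct_eq hm, h.ct_eq hl] at this
    omega
  · have up : ∀ m l, m ≤ l → l < n → Reach R (c m) (c l) := by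
      intro m l hml hl
      induction l, hml using Nat.le_induction with
      | base => exact Relation.ReflTransGen.refl
      | succ l hml ih => exact (ih (by omega)).tail ⟨h.mem hl, (h.2 l hl).adj⟩
    have down : ∀ m l, m ≤ l → l < n → Reach R (c l) (c m) := by
      intro m l hml hl
      induction l, hml using Nat.le_induction with
      | base => exact Relation.ReflTransGen.refl
      | succ l hml ih =>
        exact Relation.ReflTransGen.head ⟨h.mem (by omega), adj_symm (h.2 l hl).adj⟩ (ih (by omega))
    intro a ha b hb
    obtain ⟨m, hm, rfl⟩ := h.exists ha
    obtain ⟨l, hl, rfl⟩ := h.exists hb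
    rcases le_total m l with hml | hml
    · exact up m l hml hl
    · exact down l m hml hm
  · rintro ⟨i, j, h1, _, _, h2⟩
    have := h.ct_inj h1 h2 (by simp [ct])
    simp at this

/-! ### Beads: the effect of adding a ribbon -/

/-- The position of the bead attached to row `i` of a partition. -/
def beta (lam : YoungDiagram) (i : ℕ) : ℤ := (lam.rowLen i : ℤ) - i

/-- The bead positions of the first `n` rows. -/
def beads (n : ℕ) (lam : YoungDiagram) : Finset ℤ := (Finset.range n).image (beta lam)

/-- A partition with at most `n` rows whose `n` beads lie on distinct runners of the `n`-abacus. For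
partitions with at most `n` rows, this says that the `n`-core is empty. -/
def Good (n : ℕ) (lam : YoungDiagram) : Prop :=
  (∀ c ∈ lam.cells, c.1 < n) ∧ ((beads n lam).image (· % (n : ℤ))).card = n

lemma beta_lt (lam : YoungDiagram) {i j : ℕ} (h : i < j) : beta lam j < beta lam i := by
  have := lam.rowLen_anti i j h.le
  unfold beta; omega

lemma beta_inj (lam : YoungDiagram) {i j : ℕ} (h : beta lam i = beta lam j) : i = j := by
  rcases lt_trichotomy i j with h1 | h1 | h1
  · have := beta_lt lam h1; omega
  · exact h1
  · have := beta_lt lam h1; omega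

lemma mem_beads {n : ℕ} {lam : YoungDiagram} {x : ℤ} :
    x ∈ beads n lam ↔ ∃ i < n, beta lam i = x := by
  simp [beads]

lemma card_beads (n : ℕ) (lam : YoungDiagram) : (beads n lam).card = n := by
  rw [beads, Finset.card_image_of_injective _ (fun _ _ h => beta_inj lam h), Finset.card_range]

lemma Good.not_dvd {n : ℕ} {lam : YoungDiagram} (h : Good n lam) {x y : ℤ}
    (hx : x ∈ beads n lam) (hy : y ∈ beads n lam) (hxy : x ≠ y) : ¬ ((n : ℤ) ∣ y - x) := by
  intro hd
  have hinj : Set.InjOn (· % (n : ℤ)) (beads n lam : Set ℤ) :=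
    Finset.card_image_iff.1 (by rw [h.2, card_beads])
  exact hxy (hinj hx hy (Int.modEq_iff_dvd.2 hd : x ≡ y [ZMOD n]))

lemma good_bot {n : ℕ} : Good n ⊥ := by
  refine ⟨by simp, ?_⟩
  rw [Finset.card_image_of_injOn, card_beads]
  intro x hx y hy hxy
  simp only [Finset.mem_coe, mem_beads] at hx hy
  obtain ⟨i, hi, rfl⟩ := hx
  obtain ⟨j, hj, rfl⟩ := hy
  have h0 : ∀ i, (⊥ : YoungDiagram).rowLen i = 0 := by
    intro i
    by_contra h
    have : (i, 0) ∈ (⊥ : YoungDiagram).cells := mem_cells_iff.2 (by omega)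
    simp at this
  simp only [beta, h0] at *
  have hd : (n : ℤ) ∣ (((0 : ℕ) : ℤ) - j) - (((0 : ℕ) : ℤ) - i) := Int.ModEq.dvd hxy
  have := Int.eq_zero_of_abs_lt_dvd hd (by rw [abs_lt]; constructor <;> push_cast <;> omega)
  push_cast at this ⊢
  omega

section Step

variable {n : ℕ} {mu lam : YoungDiagram} {c : ℕ → Cell}

lemma step_row_outside (h : mu ≤ lam) (hp : IsPath n (lam.cells \ mu.cells) c) {i : ℕ}
    (hi : i < (c (n - 1)).1 ∨ (c 0).1 < i) : lam.rowLen i = mu.rowLen i := by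
  by_contra hne
  have h1 := rowLen_le_of_le h i
  have h2 : (i, mu.rowLen i) ∈ lam.cells \ mu.cells := mem_sdiff_iff.2 (by omega)
  have h3 := hp.row_bounds h2
  simp only at h3
  omega

lemma step_row_inside (hn : 1 ≤ n) (hp : IsPath n (lam.cells \ mu.cells) c)
    {i : ℕ} (hi : (c (n - 1)).1 ≤ i) (hi' : i < (c 0).1) :
    lam.rowLen (i + 1) = mu.rowLen i + 1 := by
  obtain ⟨m, hm, h1, h2, h3⟩ := hp.exists_up hn hi hi'
  obtain ⟨j, hj⟩ : ∃ j, (c m).2 = j := ⟨_, rfl⟩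
  have e1 : c m = (i + 1, j) := Prod.ext h1 hj
  have e2 : c (m + 1) = (i, j) := Prod.ext h2 (h3.symm.trans hj)
  have m1 := hp.mem (m := m) (by omega)
  have m2 := hp.mem hm
  have a1 : ¬ (j + 1 < lam.rowLen (i + 1)) := by
    intro hlt
    have hm3 : (i + 1, j + 1) ∈ lam.cells \ mu.cells := by
      rw [e1, mem_sdiff_iff] at m1
      rw [mem_sdiff_iff]; omega
    have := hp.ct_inj hm3 m2 (by rw [e2]; simp [ct])
    rw [e2] at this
    simp at this
  have a2 : ¬ (mu.rowLen i < j) := by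
    intro hlt
    have hm3 : (i, j - 1) ∈ lam.cells \ mu.cells := by
      rw [e2, mem_sdiff_iff] at m2
      rw [mem_sdiff_iff]; omega
    have := hp.ct_inj hm3 m1 (by rw [e1]; simp [ct]; omega)
    rw [e1] at this
    simp at this
  rw [e1, mem_sdiff_iff] at m1
  rw [e2, mem_sdiff_iff] at m2
  omega

lemma step_row_tail (hn : 1 ≤ n) (hp : IsPath n (lam.cells \ mu.cells) c) :
    mu.rowLen (c 0).1 = (c 0).2 := by
  have m0 := hp.mem (m := 0) (by omega)
  by_contra hne
  have m1 := mem_sdiff_iff.1 (show ((c 0).1, (c 0).2) ∈ _ from m0)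
  have m2 : ((c 0).1, (c 0).2 - 1) ∈ lam.cells \ mu.cells := mem_sdiff_iff.2 (by omega)
  have := (hp.ct_bounds m2).1
  unfold ct at this
  simp only at this
  omega

lemma step_row_head (hn : 1 ≤ n) (hp : IsPath n (lam.cells \ mu.cells) c) :
    lam.rowLen (c (n - 1)).1 = (c (n - 1)).2 + 1 := by
  have m0 := hp.mem (m := n - 1) (by omega)
  have hct := hp.ct_eq (m := n - 1) (by omega)
  by_contra hne
  have m1 := mem_sdiff_iff.1 (show ((c (n - 1)).1, (c (n - 1)).2) ∈ _ from m0)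
  have m2 : ((c (n - 1)).1, (c (n - 1)).2 + 1) ∈ lam.cells \ mu.cells :=
    mem_sdiff_iff.2 (by omega)
  have := (hp.ct_bounds m2).2
  unfold ct at this hct
  simp only at this
  push_cast at this hct
  omega

/-- Adding an `n`-ribbon with tail in row `b` and head in row `t` moves the bead of row `b` up by
`n` positions, past the beads of the rows `t, …, b - 1`. -/
lemma step_beta (hn : 1 ≤ n) (h : mu ≤ lam) (hp : IsPath n (lam.cells \ mu.cells) c) :
    (c (n - 1)).1 ≤ (c 0).1 ∧
    beta mu (c 0).1 = ct (c 0) ∧ beta lam (c (n - 1)).1 = ct (c 0) + n ∧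
    (∀ i, (c (n - 1)).1 ≤ i → i < (c 0).1 → beta lam (i + 1) = beta mu i) ∧
    (∀ i, i < (c (n - 1)).1 ∨ (c 0).1 < i → beta lam i = beta mu i) := by
  refine ⟨(hp.mono (Nat.zero_le _) (by omega)).1, ?_, ?_, ?_, ?_⟩
  · rw [beta, step_row_tail hn hp]; rfl
  · have hct := hp.ct_eq (m := n - 1) (by omega)
    rw [beta, step_row_head hn hp]
    unfold ct at hct ⊢
    push_cast [hn] at hct ⊢
    omega
  · intro i h1 h2
    rw [beta, beta, step_row_inside hn hp h1 h2]; push_cast; ring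
  · intro i hi
    rw [beta, beta, step_row_outside h hp hi]

lemma step_beads (hn : 1 ≤ n) (h : mu ≤ lam) (hp : IsPath n (lam.cells \ mu.cells) c)
    (hb : (c 0).1 < n) :
    ct (c 0) ∈ beads n mu ∧ ct (c 0) + n ∉ beads n mu ∧
    beads n lam = insert (ct (c 0) + n) ((beads n mu).erase (ct (c 0))) := by
  obtain ⟨htb, h0, h1, h2, h3⟩ := step_beta hn h hp
  set b := (c 0).1
  set t := (c (n - 1)).1
  set p := ct (c 0)
  refine ⟨mem_beads.2 ⟨b, hb, h0⟩, ?_, ?_⟩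
  · intro hmem
    obtain ⟨i, hi, hip⟩ := mem_beads.1 hmem
    by_cases c1 : i < t ∨ b < i
    · have := beta_inj lam ((h3 i c1).trans (hip.trans h1.symm)); omega
    · by_cases c2 : i = b
      · subst c2; omega
      · have := beta_inj lam ((h2 i (by omega) (by omega)).trans (hip.trans h1.symm)); omega
  · ext x
    simp only [Finset.mem_insert, Finset.mem_erase, mem_beads]
    constructor
    · rintro ⟨i, hi, rfl⟩
      by_cases c1 : i < t ∨ b < i
      · refine Or.inr ⟨?_, i, hi, (h3 i c1).symm⟩
        rw [h3 i c1, ← h0]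
        intro he
        have := beta_inj mu he; omega
      · by_cases c2 : i = t
        · left; rw [c2, h1]
        · obtain ⟨i, rfl⟩ : ∃ k, i = k + 1 := ⟨i - 1, by omega⟩
          have := h2 i (by omega) (by omega)
          refine Or.inr ⟨?_, i, by omega, this.symm⟩
          rw [this, ← h0]
          intro he
          have := beta_inj mu he; omega
    · rintro (rfl | ⟨hx, i, hi, rfl⟩)
      · exact ⟨t, by omega, h1⟩
      · by_cases c1 : i < t ∨ b < i
        · exact ⟨i, hi, h3 i c1⟩
        · have : i ≠ b := by rintro rfl; exact hx h0
          exact ⟨i + 1, by omega, h2 i (by omega) (by omega)⟩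

lemma card_beads_gt (i : ℕ) (hi : i ≤ n) (x : ℤ) (h1 : ∀ j < i, x < beta mu j)
    (h2 : ∀ j, i ≤ j → beta mu j ≤ x) : ((beads n mu).filter (x < ·)).card = i := by
  have : (beads n mu).filter (x < ·) = (Finset.range i).image (beta mu) := by
    ext y
    simp only [Finset.mem_filter, mem_beads, Finset.mem_image, Finset.mem_range]
    constructor
    · rintro ⟨⟨j, hj, rfl⟩, hx⟩
      refine ⟨j, ?_, rfl⟩
      by_contra hlt
      have := h2 j (by omega)
      omega
    · rintro ⟨j, hj, rfl⟩
      exact ⟨⟨j, by omega, rfl⟩, h1 j hj⟩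
  rw [this, Finset.card_image_of_injective _ (fun _ _ h => beta_inj mu h), Finset.card_range]

lemma card_gt_tail (hn : 1 ≤ n) (h : mu ≤ lam) (hp : IsPath n (lam.cells \ mu.cells) c)
    (hb : (c 0).1 < n) : ((beads n mu).filter (ct (c 0) < ·)).card = (c 0).1 := by
  obtain ⟨htb, h0, h1, h2, h3⟩ := step_beta hn h hp
  apply card_beads_gt _ hb.le
  · intro j hj; rw [← h0]; exact beta_lt mu hj
  · intro j hj; rw [← h0]
    rcases Nat.lt_or_eq_of_le hj with hj | hj
    · exact (beta_lt mu hj).le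
    · rw [hj]

lemma card_gt_head (hn : 1 ≤ n) (h : mu ≤ lam) (hp : IsPath n (lam.cells \ mu.cells) c)
    (hb : (c 0).1 < n) :
    ((beads n mu).filter (ct (c 0) + n < ·)).card = (c (n - 1)).1 := by
  obtain ⟨htb, h0, h1, h2, h3⟩ := step_beta hn h hp
  apply card_beads_gt _ (by omega)
  · intro j hj
    rw [← h1, ← h3 j (Or.inl hj)]; exact beta_lt lam hj
  · have key : beta mu (c (n - 1)).1 ≤ beta lam (c (n - 1)).1 := by
      have := rowLen_le_of_le h (c (n - 1)).1
      unfold beta; omega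
    intro j hj
    rw [← h1]
    rcases Nat.lt_or_eq_of_le hj with hj | hj
    · exact (beta_lt mu hj).le.trans key
    · rw [← hj]; exact key

lemma step_good_iff (hn : 1 ≤ n) (h : mu ≤ lam) (hp : IsPath n (lam.cells \ mu.cells) c)
    (hb : (c 0).1 < n) : Good n lam ↔ Good n mu := by
  obtain ⟨h1, h2, h3⟩ := step_beads hn h hp hb
  have hsub := YoungDiagram.cells_subset_iff.2 h
  have e : (beads n lam).image (· % (n : ℤ)) = (beads n mu).image (· % (n : ℤ)) := by
    rw [h3, Finset.image_insert]
    conv_rhs => rw [← Finset.insert_erase h1, Finset.image_insert]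
    simp
  unfold Good
  rw [e]
  refine and_congr_left fun _ => ⟨fun hr x hx => hr x (hsub hx), fun hr x hx => ?_⟩
  by_cases hx' : x ∈ mu.cells
  · exact hr x hx'
  · exact (hp.row_bounds (Finset.mem_sdiff.2 ⟨hx, hx'⟩)).2.trans_lt hb

end Step

/-! ### The potential whose increments are `2 * bottom row - spin` -/

/-- Interaction of two beads. If `n ∤ y - x`, then moving `x` up by `n` positions
increases `pairW n x y` by `1` for each of the conditions `x < y` and `x + n < y`. -/
def pairW (n : ℕ) (x y : ℤ) : ℤ :=
  if x = y then 0 else x / n + y / n - |x - y| / n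

/-- Twice the total interaction of the beads of a partition. -/
def energy (n : ℕ) (lam : YoungDiagram) : ℤ :=
  ∑ x ∈ beads n lam, ∑ y ∈ beads n lam, pairW n x y

lemma pairW_comm (n : ℕ) (x y : ℤ) : pairW n x y = pairW n y x := by
  unfold pairW
  rw [abs_sub_comm, add_comm (x / n)]
  simp [eq_comm]

lemma pairW_step {n : ℕ} (hn : 1 ≤ n) {x y : ℤ} (h : ¬ ((n : ℤ) ∣ y - x)) :
    pairW n (x + n) y = pairW n x y + (if x < y then 1 else 0) + (if x + n < y then 1 else 0) := by
  have hn0 : (n : ℤ) ≠ 0 := by omega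
  have h1 : x ≠ y := by rintro rfl; simp at h
  have h2 : x + n ≠ y := by rintro rfl; simp at h
  have h3 : (x + n) / n = x / n + 1 := Int.add_ediv_of_dvd_right (dvd_refl _) |>.trans (by
    rw [Int.ediv_self hn0])
  unfold pairW
  rw [if_neg h1, if_neg h2, h3]
  rcases lt_trichotomy x y with hlt | he | hgt
  · rcases lt_trichotomy (x + n) y with hlt' | he' | hgt'
    · rw [if_pos hlt, if_pos hlt', abs_of_neg (by omega), abs_of_neg (by omega)]
      have : -(x - y) = -(x + n - y) + n := by ring
      rw [this, Int.add_ediv_of_dvd_right (dvd_refl _), Int.ediv_self hn0]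
      ring
    · exact absurd he' h2
    · rw [if_pos hlt, if_neg (by omega), abs_of_pos (by omega), abs_of_neg (by omega),
        Int.ediv_eq_zero_of_lt (a := x + n - y) (by omega) (by omega),
        Int.ediv_eq_zero_of_lt (a := -(x - y)) (by omega) (by omega)]
      ring
  · exact absurd he h1
  · rw [if_neg (by omega), if_neg (by omega), abs_of_pos (by omega), abs_of_pos (by omega)]
    have : x + n - y = (x - y) + n := by ring
    rw [this, Int.add_ediv_of_dvd_right (dvd_refl _), Int.ediv_self hn0]
    ring

lemma sum_pairW_insert (n : ℕ) {A : Finset ℤ} {p : ℤ} (hp : p ∉ A) :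
    ∑ x ∈ insert p A, ∑ y ∈ insert p A, pairW n x y =
      ∑ x ∈ A, ∑ y ∈ A, pairW n x y + 2 * ∑ y ∈ A, pairW n p y := by
  rw [Finset.sum_insert hp, Finset.sum_insert hp]
  simp_rw [Finset.sum_insert hp, Finset.sum_add_distrib]
  have : ∑ x ∈ A, pairW n x p = ∑ y ∈ A, pairW n p y :=
    Finset.sum_congr rfl fun x _ => pairW_comm n x p
  rw [this]
  simp [pairW]
  ring

/-- Adding a ribbon `R` increases half the energy by `2 * bot R - ribbonSpin R`, the sum of the
indices of the bottom and top rows of `R`. -/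
lemma energy_step {n : ℕ} {mu lam : YoungDiagram} (hn : 1 ≤ n) (h : mu ≤ lam)
    (hR : IsRibbon n (lam.cells \ mu.cells)) (hg : Good n lam) :
    energy n lam = energy n mu +
      2 * (2 * (bot (lam.cells \ mu.cells) : ℤ) - ribbonSpin (lam.cells \ mu.cells)) := by
  obtain ⟨c, hp⟩ := exists_path hn hR
  have hb : (c 0).1 < n := hg.1 _ (Finset.mem_sdiff.1 (hp.mem (m := 0) (by omega))).1
  have hgm := (step_good_iff hn h hp hb).1 hg
  obtain ⟨h1, h2, h3⟩ := step_beads hn h hp hb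
  have e1 := sum_pairW_insert n (Finset.notMem_erase (ct (c 0)) (beads n mu))
  rw [Finset.insert_erase h1] at e1
  have e2 := sum_pairW_insert n (fun h => h2 (Finset.mem_of_mem_erase h) :
    ct (c 0) + n ∉ (beads n mu).erase (ct (c 0)))
  rw [← h3] at e2
  have e3 : ∑ y ∈ (beads n mu).erase (ct (c 0)), pairW n (ct (c 0) + n) y =
      ∑ y ∈ (beads n mu).erase (ct (c 0)), pairW n (ct (c 0)) y
        + ((c 0).1 : ℤ) + ((c (n - 1)).1 : ℤ) := by
    rw [← card_gt_tail hn h hp hb, ← card_gt_head hn h hp hb, Finset.card_filter,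
      Finset.card_filter]
    push_cast
    rw [← Finset.sum_erase (s := beads n mu) (a := ct (c 0))
        (f := fun y => if ct (c 0) < y then (1 : ℤ) else 0) (by simp),
      ← Finset.sum_erase (s := beads n mu) (a := ct (c 0))
        (f := fun y => if ct (c 0) + n < y then (1 : ℤ) else 0) (by simp),
      ← Finset.sum_add_distrib, ← Finset.sum_add_distrib]
    refine Finset.sum_congr rfl fun y hy => ?_
    rw [Finset.mem_erase] at hy
    exact pairW_step hn (hgm.not_dvd h1 hy.2 (Ne.symm hy.1))
  have e4 := hp.bot_eq hn
  have e5 := hp.spin_eq hn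
  rw [energy, energy, e1, e2, e3, e4]
  have : (ribbonSpin (lam.cells \ mu.cells) : ℤ) = (c 0).1 - (c (n - 1)).1 := by omega
  rw [this]
  ring

/-! ### Adding and removing single ribbons -/

lemma isLowerSet_of_neighbours {S : Finset Cell}
    (h1 : ∀ i j, (i + 1, j) ∈ S → (i, j) ∈ S) (h2 : ∀ i j, (i, j + 1) ∈ S → (i, j) ∈ S) :
    IsLowerSet (S : Set Cell) := by
  have g1 : ∀ d i j, (i + d, j) ∈ S → (i, j) ∈ S := by
    intro d
    induction d with
    | zero => intro i j h; exact h
    | succ d ih => intro i j h; exact ih i j (h1 _ _ h)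
  have g2 : ∀ d i j, (i, j + d) ∈ S → (i, j) ∈ S := by
    intro d
    induction d with
    | zero => intro i j h; exact h
    | succ d ih => intro i j h; exact ih i j (h2 _ _ h)
  rintro ⟨a, b⟩ ⟨i, j⟩ ⟨hi, hj⟩ hab
  simp only at hi hj
  apply g1 (a - i)
  apply g2 (b - j)
  rw [Nat.add_sub_cancel' hi, Nat.add_sub_cancel' hj]
  exact hab

lemma cells_eq_union {mu lam : YoungDiagram} (h : mu ≤ lam) :
    lam.cells = mu.cells ∪ (lam.cells \ mu.cells) := by
  rw [Finset.union_sdiff_of_subset (YoungDiagram.cells_subset_iff.2 h)]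

/-- An addable ribbon is determined by its bottom row. -/
lemma add_unique {n : ℕ} (hn : 1 ≤ n) {mu lam lam' : YoungDiagram} (h : mu ≤ lam) (h' : mu ≤ lam')
    (hR : IsRibbon n (lam.cells \ mu.cells)) (hR' : IsRibbon n (lam'.cells \ mu.cells))
    (hb : bot (lam.cells \ mu.cells) = bot (lam'.cells \ mu.cells)) : lam = lam' := by
  obtain ⟨c, hp⟩ := exists_path hn hR
  obtain ⟨c', hp'⟩ := exists_path hn hR'
  rw [hp.bot_eq hn, hp'.bot_eq hn] at hb
  -- if one path turns up at a cell then so does the other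
  have step : ∀ (la lb : YoungDiagram) (e f : ℕ → Cell), IsPath n (la.cells \ mu.cells) e →
      IsPath n (lb.cells \ mu.cells) f → ∀ m, m + 1 < n → e m = f m →
      (e m).1 = (e (m + 1)).1 + 1 → (f (m + 1)).1 = (f m).1 → False := by
    intro la lb e f he hf m hm hef h1 h2
    have ne := he.2 m hm
    have nf := hf.2 m hm
    unfold NE at ne nf
    rw [hef] at ne h1
    have m1 := he.mem hm
    have m2 := hf.mem (m := m) (by omega)
    have m3 := hf.mem hm
    rw [← Prod.mk.eta (p := e (m + 1)), mem_sdiff_iff] at m1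
    rw [← Prod.mk.eta (p := f m), mem_sdiff_iff] at m2
    have ha := lb.rowLen_anti (e (m + 1)).1 (f m).1 (by omega)
    have h3 : ((e (m + 1)).1, (e (m + 1)).2) ∈ lb.cells \ mu.cells := by
      rw [mem_sdiff_iff]
      omega
    have := hf.ct_inj h3 m3 (by unfold ct; simp only; omega)
    have := congrArg Prod.fst this
    simp only at this
    omega
  have key : ∀ m, m < n → c m = c' m := by
    intro m
    induction m with
    | zero =>
      intro _
      apply Prod.ext hb
      rw [← step_row_tail hn hp, ← step_row_tail hn hp', hb]
    | succ m ih =>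
      intro hm
      have e := ih (by omega)
      have s1 := step _ _ c c' hp hp' m hm e
      have s2 := step _ _ c' c hp' hp m hm e.symm
      have n1 := hp.2 m hm
      have n2 := hp'.2 m hm
      unfold NE at n1 n2
      rw [← e] at n2 s1 s2
      rcases n1 with n1 | n1 <;> rcases n2 with n2 | n2 <;>
        first
          | exact Prod.ext (by omega) (by omega)
          | exact (s1 (by omega) (by omega)).elim
          | exact (s2 (by omega) (by omega)).elim
  apply YoungDiagram.ext
  rw [cells_eq_union h, cells_eq_union h', hp.1, hp'.1]
  congr 1
  exact Finset.image_congr fun m hm => key m (by simpa using hm)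

/-- One step along the outer boundary of `mu`: up if the cell above is free, else right. -/
def outerNext (mu : YoungDiagram) (x : Cell) : Cell :=
  if 0 < x.1 ∧ mu.rowLen (x.1 - 1) ≤ x.2 then (x.1 - 1, x.2) else (x.1, x.2 + 1)

/-- The path along the outer boundary of `mu` that starts at the end of row `b`. -/
def outerPath (mu : YoungDiagram) (b : ℕ) : ℕ → Cell
  | 0 => (b, mu.rowLen b)
  | m + 1 => outerNext mu (outerPath mu b m)

lemma outerNext_NE (mu : YoungDiagram) (x : Cell) : NE x (outerNext mu x) := by
  unfold NE outerNext
  split_ifs with h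
  · exact Or.inr ⟨by have := h.1; simp only; omega, rfl⟩
  · exact Or.inl ⟨rfl, rfl⟩

lemma outerPath_inv (mu : YoungDiagram) (b m : ℕ) :
    mu.rowLen (outerPath mu b m).1 ≤ (outerPath mu b m).2 ∧
    ((outerPath mu b m).1 = 0 ∨
      (outerPath mu b m).2 ≤ mu.rowLen ((outerPath mu b m).1 - 1)) ∧
    (outerPath mu b m).1 ≤ b := by
  induction m with
  | zero =>
    refine ⟨le_rfl, Or.inr ?_, le_rfl⟩
    show mu.rowLen b ≤ mu.rowLen (b - 1)
    exact mu.rowLen_anti _ _ (by omega)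
  | succ m ih =>
    rw [outerPath]
    set x := outerPath mu b m
    unfold outerNext
    split_ifs with hx
    · have := mu.rowLen_anti (x.1 - 1 - 1) (x.1 - 1) (by omega)
      simp only
      omega
    · simp only
      omega

/-- In a partition with beads on distinct runners, a ribbon can be added in every row: the end of
the boundary path is blocked only by a bead on the same runner. -/
lemma add_exists {n : ℕ} (hn : 1 ≤ n) {mu : YoungDiagram} (hg : Good n mu) {b : ℕ} (hb : b < n) :
    ∃ lam, mu ≤ lam ∧ IsRibbon n (lam.cells \ mu.cells) ∧ bot (lam.cells \ mu.cells) = b := by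
  set c := outerPath mu b with hc
  set R := (Finset.range n).image c with hR
  have hp : IsPath n R c := ⟨rfl, fun m _ => outerNext_NE mu _⟩
  have hinv : ∀ m, mu.rowLen (c m).1 ≤ (c m).2 ∧
      ((c m).1 = 0 ∨ (c m).2 ≤ mu.rowLen ((c m).1 - 1)) ∧ (c m).1 ≤ b := outerPath_inv mu b
  have hup : ∀ i j, (i + 1, j) ∈ R → (i, j) ∉ mu.cells → (i, j) ∈ R := by
    intro i j hij hmu
    obtain ⟨m, hm, hcm⟩ := hp.exists hij
    rw [mem_cells_iff] at hmu
    have h1 := hinv m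
    rw [hcm] at h1
    simp only [Nat.add_sub_cancel] at h1
    by_cases hmn : m + 1 < n
    · have : c (m + 1) = (i, j) := by
        change outerNext mu (c m) = _
        rw [hcm]
        unfold outerNext
        rw [if_pos ⟨by simp, by simp only [Nat.add_sub_cancel]; omega⟩]
        simp
      rw [← this]
      exact hp.mem hmn
    · exfalso
      have hct := hp.ct_eq hm
      have hi : beta mu i ∈ beads n mu := mem_beads.2 ⟨i, by omega, rfl⟩
      have hbb : beta mu b ∈ beads n mu := mem_beads.2 ⟨b, hb, rfl⟩
      have hdiff : beta mu i - beta mu b = n := by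
        rw [hcm, show c 0 = (b, mu.rowLen b) from rfl] at hct
        unfold ct at hct
        unfold beta
        simp only at hct
        push_cast at hct
        omega
      exact hg.not_dvd hbb hi (by omega) ⟨1, by omega⟩
  have hleft : ∀ i j, (i, j + 1) ∈ R → (i, j) ∉ mu.cells → (i, j) ∈ R := by
    intro i j hij hmu
    obtain ⟨m, hm, hcm⟩ := hp.exists hij
    rw [mem_cells_iff] at hmu
    rcases m with _ | m
    · rw [show c 0 = (b, mu.rowLen b) from rfl, Prod.mk.injEq] at hcm
      rw [hcm.1] at hcm
      omega
    · have h1 := hp.2 m hm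
      have h2 := hinv m
      unfold NE at h1
      rw [hcm] at h1
      simp only at h1
      rcases h1 with h1 | h1
      · have : c m = (i, j) := Prod.ext (by omega) (by simp only; omega)
        rw [← this]; exact hp.mem (by omega)
      · rw [h1.1] at h2
        simp only [Nat.add_sub_cancel] at h2
        omega
  let lam : YoungDiagram := ⟨mu.cells ∪ R, by
    apply isLowerSet_of_neighbours
    · intro i j h
      rw [Finset.mem_union] at h ⊢
      by_cases hmu : (i, j) ∈ mu.cells
      · exact Or.inl hmu
      · rcases h with h | h
        · exact absurd (mu.isLowerSet (a := (i + 1, j)) (b := (i, j)) (by simp) h) hmu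
        · exact Or.inr (hup i j h hmu)
    · intro i j h
      rw [Finset.mem_union] at h ⊢
      by_cases hmu : (i, j) ∈ mu.cells
      · exact Or.inl hmu
      · rcases h with h | h
        · exact absurd (mu.isLowerSet (a := (i, j + 1)) (b := (i, j)) (by simp) h) hmu
        · exact Or.inr (hleft i j h hmu)⟩
  have hle : mu ≤ lam := YoungDiagram.cells_subset_iff.1 Finset.subset_union_left
  have hsd : lam.cells \ mu.cells = R := by
    change (mu.cells ∪ R) \ mu.cells = R
    rw [Finset.union_sdiff_left, Finset.sdiff_eq_self_iff_disjoint, Finset.disjoint_left]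
    rintro ⟨i, j⟩ hx hmu
    obtain ⟨m, hm, hcm⟩ := hp.exists hx
    have := (hinv m).1
    rw [hcm] at this
    rw [mem_cells_iff] at hmu
    simp only at this
    omega
  refine ⟨lam, hle, ?_, ?_⟩
  · rw [hsd]; exact hp.isRibbon ⟨lam, mu, hle, hsd.symm⟩
  · rw [hsd, hp.bot_eq hn]; rfl

/-- One step along the rim of `lam`: down if possible, else left. -/
def innerNext (lam : YoungDiagram) (x : Cell) : Cell :=
  if x.2 < lam.rowLen (x.1 + 1) then (x.1 + 1, x.2) else (x.1, x.2 - 1)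

/-- The path along the rim of `lam` that starts at the end of row `0`. -/
def innerPath (lam : YoungDiagram) : ℕ → Cell
  | 0 => (0, lam.rowLen 0 - 1)
  | m + 1 => innerNext lam (innerPath lam m)

lemma innerPath_inv {n : ℕ} {lam : YoungDiagram} (hg : Good n lam) (h0 : 1 ≤ lam.rowLen 0)
    (m : ℕ) (hm : m < n) :
    (innerPath lam m).2 < lam.rowLen (innerPath lam m).1 ∧
    lam.rowLen ((innerPath lam m).1 + 1) ≤ (innerPath lam m).2 + 1 ∧
    ct (innerPath lam m) = beta lam 0 - 1 - m ∧
    (m + 1 < n → NE (innerPath lam (m + 1)) (innerPath lam m)) := by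
  induction m with
  | zero =>
    have h1 := lam.rowLen_anti 0 1 (by omega)
    have hct : ct (innerPath lam 0) = beta lam 0 - 1 - (0 : ℕ) := by
      simp only [innerPath, ct, beta]; omega
    refine ⟨by simp only [innerPath]; omega, by simp only [innerPath, zero_add]; omega, hct, ?_⟩
    intro hn
    have hcol : lam.rowLen 1 = 0 → 2 ≤ lam.rowLen 0 := by
      intro h10
      by_contra hlt
      have hi : beta lam (n - 1) ∈ beads n lam := mem_beads.2 ⟨n - 1, by omega, rfl⟩
      have hbb : beta lam 0 ∈ beads n lam := mem_beads.2 ⟨0, by omega, rfl⟩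
      have h2 := lam.rowLen_anti 1 (n - 1) (by omega)
      have hdiff : beta lam (n - 1) - beta lam 0 = - n := by
        unfold beta; omega
      exact hg.not_dvd hbb hi (by omega) ⟨-1, by omega⟩
    simp only [innerPath, innerNext, NE, zero_add]
    split_ifs with h
    · exact Or.inr ⟨rfl, rfl⟩
    · exact Or.inl ⟨rfl, by simp only; omega⟩
  | succ m ih =>
    obtain ⟨i1, i2, i3, i4⟩ := ih (by omega)
    have hne := i4 hm
    have hx : innerPath lam (m + 1) = innerNext lam (innerPath lam m) := rfl
    set x := innerPath lam m
    set y := innerPath lam (m + 1) with hy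
    have b1 : y.2 < lam.rowLen y.1 ∧ lam.rowLen (y.1 + 1) ≤ y.2 + 1 := by
      rw [hx]
      unfold innerNext
      split_ifs with h
      · have := lam.rowLen_anti (x.1 + 1) (x.1 + 1 + 1) (by omega)
        simp only; omega
      · simp only; omega
    have b3 : ct y = beta lam 0 - 1 - (m + 1 : ℕ) := by
      unfold NE at hne
      unfold ct at i3 ⊢
      push_cast
      omega
    refine ⟨b1.1, b1.2, b3, ?_⟩
    intro hm2
    have hcol : lam.rowLen (y.1 + 1) = 0 → 1 ≤ y.2 := by
      intro hz
      by_contra hlt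
      unfold ct beta at b3
      push_cast at b3
      have hle : lam.rowLen 0 < n := by omega
      have hi : beta lam (n - lam.rowLen 0) ∈ beads n lam :=
        mem_beads.2 ⟨n - lam.rowLen 0, by omega, rfl⟩
      have hbb : beta lam 0 ∈ beads n lam := mem_beads.2 ⟨0, by omega, rfl⟩
      have h2 := lam.rowLen_anti (y.1 + 1) (n - lam.rowLen 0) (by omega)
      have hdiff : beta lam (n - lam.rowLen 0) - beta lam 0 = - n := by
        unfold beta; push_cast [hle.le]; omega
      exact hg.not_dvd hbb hi (by omega) ⟨-1, by omega⟩
    change NE (innerNext lam y) y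
    unfold innerNext NE
    split_ifs with h
    · exact Or.inr ⟨rfl, rfl⟩
    · exact Or.inl ⟨rfl, by simp only; omega⟩

/-- A nonempty partition with beads on distinct runners has a removable ribbon whose head lies in
the top row, so that its spin equals the index of its bottom row. -/
lemma remove_exists {n : ℕ} (hn : 1 ≤ n) {lam : YoungDiagram} (hg : Good n lam) (hne : lam ≠ ⊥) :
    ∃ mu, mu ≤ lam ∧ IsRibbon n (lam.cells \ mu.cells) ∧
      ribbonSpin (lam.cells \ mu.cells) = bot (lam.cells \ mu.cells) := by
  have h0 : 1 ≤ lam.rowLen 0 := by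
    by_contra h
    apply hne
    apply YoungDiagram.ext
    rw [YoungDiagram.cells_bot, Finset.eq_empty_iff_forall_notMem]
    rintro ⟨i, j⟩ hij
    rw [mem_cells_iff] at hij
    have := lam.rowLen_anti 0 i (by omega)
    omega
  have hinv := innerPath_inv hg h0
  set d := innerPath lam with hd
  set c : ℕ → Cell := fun m => d (n - 1 - m) with hc
  set R := (Finset.range n).image c with hR
  have hp : IsPath n R c := by
    refine ⟨rfl, fun m hm => ?_⟩
    have := (hinv (n - 1 - (m + 1)) (by omega)).2.2.2 (by omega)
    rw [show n - 1 - (m + 1) + 1 = n - 1 - m by omega] at this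
    exact this
  have hex : ∀ x ∈ R, ∃ m < n, d m = x := by
    intro x hx
    obtain ⟨m, hm, h⟩ := hp.exists hx
    exact ⟨n - 1 - m, by omega, h⟩
  have hmem : ∀ m < n, d m ∈ R := by
    intro m hm
    have := hp.mem (m := n - 1 - m) (by omega)
    simp only [hc] at this
    rwa [show n - 1 - (n - 1 - m) = m by omega] at this
  have hright : ∀ i j, (i, j) ∈ R → (i, j + 1) ∈ lam.cells → (i, j + 1) ∈ R := by
    intro i j hij hl
    obtain ⟨m, hm, hdm⟩ := hex _ hij
    rw [mem_cells_iff] at hl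
    rcases m with _ | m
    · have : d 0 = (0, lam.rowLen 0 - 1) := rfl
      rw [this, Prod.mk.injEq] at hdm
      rw [← hdm.1] at hl
      omega
    · obtain ⟨i1, i2, i3, i4⟩ := hinv m (by omega)
      have hne := i4 hm
      unfold NE at hne
      rw [hdm] at hne
      simp only at hne
      rcases hne with hne | hne
      · have : d m = (i, j + 1) := Prod.ext (by omega) (by simp only; omega)
        rw [← this]; exact hmem _ (by omega)
      · rw [← hne.1] at i2
        omega
  have hdown : ∀ i j, (i, j) ∈ R → (i + 1, j) ∈ lam.cells → (i + 1, j) ∈ R := by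
    intro i j hij hl
    obtain ⟨m, hm, hdm⟩ := hex _ hij
    have hrow := hg.1 _ hl
    rw [mem_cells_iff] at hl
    by_cases hmn : m + 1 < n
    · have : d (m + 1) = (i + 1, j) := by
        change innerNext lam (d m) = _
        rw [hdm]; unfold innerNext
        rw [if_pos hl]
      rw [← this]; exact hmem _ hmn
    · exfalso
      obtain ⟨i1, i2, i3, i4⟩ := hinv m hm
      rw [hdm] at i1 i2 i3
      simp only at hrow i2
      have hi : beta lam (i + 1) ∈ beads n lam := mem_beads.2 ⟨i + 1, by omega, rfl⟩
      have hbb : beta lam 0 ∈ beads n lam := mem_beads.2 ⟨0, by omega, rfl⟩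
      have hdiff : beta lam (i + 1) - beta lam 0 = - n := by
        unfold ct at i3
        simp only at i3
        rw [beta.eq_def lam (i + 1)]
        push_cast
        omega
      exact hg.not_dvd hbb hi (by omega) ⟨-1, by omega⟩
  let mu : YoungDiagram := ⟨lam.cells \ R, by
    apply isLowerSet_of_neighbours
    · intro i j h
      rw [Finset.mem_sdiff] at h ⊢
      exact ⟨lam.isLowerSet (a := (i + 1, j)) (b := (i, j)) (by simp) h.1,
        fun hr => h.2 (hdown i j hr h.1)⟩
    · intro i j h
      rw [Finset.mem_sdiff] at h ⊢
      exact ⟨lam.isLowerSet (a := (i, j + 1)) (b := (i, j)) (by simp) h.1,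
        fun hr => h.2 (hright i j hr h.1)⟩⟩
  have hsub : R ⊆ lam.cells := by
    intro x hx
    obtain ⟨m, hm, rfl⟩ := hex _ hx
    rw [← Prod.mk.eta (p := d m), mem_cells_iff]
    exact (hinv m hm).1
  have hle : mu ≤ lam := YoungDiagram.cells_subset_iff.1 Finset.sdiff_subset
  have hsd : lam.cells \ mu.cells = R := by
    change lam.cells \ (lam.cells \ R) = R
    rw [Finset.sdiff_sdiff_eq_self hsub]
  refine ⟨mu, hle, ?_, ?_⟩
  · rw [hsd]; exact hp.isRibbon ⟨lam, mu, hle, hsd.symm⟩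
  · have h1 := hp.spin_eq hn
    have h2 := hp.bot_eq hn
    have h3 : c (n - 1) = (0, lam.rowLen 0 - 1) := by
      simp only [hc, Nat.sub_self]; rfl
    rw [h3] at h1
    rw [hsd]
    simp only at h1
    omega

/-! ### Peeling ribbons off tilings -/

lemma tiling_erase {n : ℕ} {S R : Finset Cell} {T : Finset (Finset Cell)}
    (h : IsTilingOf n S T) (hR : R ∈ T) : IsTilingOf n (S \ R) (T.erase R) := by
  refine ⟨fun R' h' => h.1 _ (Finset.mem_of_mem_erase h'),
    h.2.1.mono (Finset.coe_subset.2 (Finset.erase_subset _ _)), ?_⟩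
  ext x
  rw [← h.2.2]
  simp only [Finset.mem_biUnion, Finset.mem_erase, Finset.mem_sdiff, id]
  constructor
  · rintro ⟨R', ⟨hne, hR'⟩, hx⟩
    exact ⟨⟨R', hR', hx⟩, fun hxR => Finset.disjoint_left.1 (h.2.1 hR' hR hne) hx hxR⟩
  · rintro ⟨⟨R', hR', hx⟩, hxR⟩
    exact ⟨R', ⟨fun e => hxR (e ▸ hx), hR'⟩, hx⟩

lemma tiling_insert {n : ℕ} {S R : Finset Cell} {T : Finset (Finset Cell)}
    (h : IsTilingOf n S T) (hR : IsRibbon n R) (hd : Disjoint R S) :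
    IsTilingOf n (R ∪ S) (insert R T) := by
  have hsub : ∀ R' ∈ T, R' ⊆ S := fun R' hR' => by
    rw [← h.2.2]; exact Finset.subset_biUnion_of_mem id hR'
  refine ⟨fun R' h' => ?_, ?_, ?_⟩
  · rcases Finset.mem_insert.1 h' with rfl | h'
    · exact hR
    · exact h.1 _ h'
  · rw [Finset.coe_insert]
    refine h.2.1.insert fun R' hR' _ => ?_
    have := Finset.disjoint_of_subset_right (hsub R' hR') hd
    exact ⟨this, this.symm⟩
  · rw [Finset.biUnion_insert, h.2.2]; rfl

lemma not_mem_of_disjoint {n : ℕ} (hn : 1 ≤ n) {S R : Finset Cell} {T : Finset (Finset Cell)}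
    (h : IsTilingOf n S T) (hR : IsRibbon n R) (hd : Disjoint R S) : R ∉ T := by
  intro hRT
  obtain ⟨x, hx⟩ : R.Nonempty := Finset.card_pos.1 (by rw [hR.1]; omega)
  refine Finset.disjoint_left.1 hd hx ?_
  rw [← h.2.2]
  exact Finset.mem_biUnion.2 ⟨R, hRT, hx⟩

section Tiling
variable {n : ℕ} {S : Finset Cell} {T : Finset (Finset Cell)}

lemma tiling_cover (h : IsTilingOf n S T) {x : Cell} (hx : x ∈ S) : ∃ R ∈ T, x ∈ R := by
  rw [← h.2.2] at hx
  simpa using hx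

lemma tiling_subset (h : IsTilingOf n S T) {R : Finset Cell} (hR : R ∈ T) : R ⊆ S := by
  rw [← h.2.2]; exact Finset.subset_biUnion_of_mem id hR

lemma tiling_eq (h : IsTilingOf n S T) {R R' : Finset Cell} (hR : R ∈ T) (hR' : R' ∈ T) {x : Cell}
    (hx : x ∈ R) (hx' : x ∈ R') : R = R' := by
  by_contra hne
  exact Finset.disjoint_left.1 (h.2.1 hR hR' hne) hx hx'

lemma tiling_card (h : IsTilingOf n S T) : S.card = n * T.card := by
  rw [← h.2.2, Finset.card_biUnion (t := id) (fun R hR R' hR' hne => h.2.1 hR hR' hne),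
    Finset.sum_congr rfl (fun R hR => show (id R).card = n from (h.1 R hR).1), Finset.sum_const, smul_eq_mul, mul_comm]

end Tiling

/-- The ribbon of smallest tail content in a horizontal strip over `mu` can be added to `mu` first.
It has the lowest bottom row of all ribbons of the strip. -/
lemma inner_peel {n : ℕ} (hn : 1 ≤ n) {mu lam : YoungDiagram} (h : mu ≤ lam)
    {T : Finset (Finset Cell)} (hT : IsHStripTiling n (lam.cells \ mu.cells) T)
    (hne : T.Nonempty) :
    ∃ R ∈ T, ∃ nu : YoungDiagram, mu ≤ nu ∧ nu ≤ lam ∧ nu.cells \ mu.cells = R ∧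
      IsHStripTiling n (lam.cells \ nu.cells) (T.erase R) ∧ ∀ R' ∈ T, bot R' ≤ bot R := by
  choose! c hc using fun R (hR : R ∈ T) => exists_path hn (hT.1.1 R hR)
  obtain ⟨R, hRT, hmin⟩ := T.exists_min_image (fun R => ct (c R 0)) hne
  have hp := hc R hRT
  have hsub := tiling_subset hT.1 hRT
  -- moving left from a cell of `R` whose upper neighbour is not in the strip stays inside `R`
  have hQ : ∀ i j, (i, j + 1) ∈ R → (i = 0 ∨ j + 1 ≤ mu.rowLen (i - 1)) →
      (i, j) ∈ lam.cells \ mu.cells → (i, j) ∈ R := by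
    intro i j hij hi hS
    obtain ⟨R', hR', hx⟩ := tiling_cover hT.1 hS
    have hp' := hc R' hR'
    obtain ⟨l, hl, hcl⟩ := hp'.exists hx
    by_cases hln : l + 1 < n
    · have hne := hp'.2 l hln
      have hm := hp'.mem hln
      rcases hne with hne | hne
      · rw [hcl] at hne
        have e : c R' (l + 1) = (i, j + 1) := Prod.ext hne.1 hne.2
        rw [e] at hm
        rw [tiling_eq hT.1 hRT hR' hij hm]
        exact hx
      · exfalso
        have hm' := tiling_subset hT.1 hR' hm
        rw [hcl] at hne
        rw [← Prod.mk.eta (p := c R' (l + 1)), mem_sdiff_iff] at hm'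
        simp only at hne
        rw [show i - 1 = (c R' (l + 1)).1 by omega] at hi
        omega
    · exfalso
      have h1 := hp'.ct_eq hl
      have h2 := (hp.ct_bounds hij).2
      have h3 := hmin R' hR'
      rw [hcl] at h1
      unfold ct at h1 h2 h3
      push_cast at h1 h2 h3
      omega
  have hnorth := hT.2 R hRT _ (hp.topRight hn)
  have hS : ∀ m < n, mu.rowLen (c R m).1 ≤ (c R m).2 ∧ (c R m).2 < lam.rowLen (c R m).1 := by
    intro m hm
    have := hsub (hp.mem hm)
    rwa [← Prod.mk.eta (p := c R m), mem_sdiff_iff] at this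
  have hP' : ∀ d, d < n → (c R (n - 1 - d)).1 = 0 ∨
      (c R (n - 1 - d)).2 ≤ mu.rowLen ((c R (n - 1 - d)).1 - 1) := by
    intro d
    induction d with
    | zero =>
      intro _
      rcases hnorth with h0 | h0
      · exact Or.inl h0
      · right
        rw [mem_sdiff_iff] at h0
        have h1 := hS (n - 1) (by omega)
        have h2 := lam.rowLen_anti ((c R (n - 1)).1 - 1) (c R (n - 1)).1 (by omega)
        rw [Nat.sub_zero]
        omega
    | succ d ih =>
      intro hd
      have hd' := ih (by omega)
      have hx := hS (n - 1 - (d + 1)) (by omega)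
      have hstep := hp.2 (n - 1 - (d + 1)) (by omega)
      rw [show n - 1 - (d + 1) + 1 = n - 1 - d by omega] at hstep
      have hy := hS (n - 1 - d) (by omega)
      have hym := hp.mem (m := n - 1 - d) (by omega)
      have hxm := hp.mem (m := n - 1 - (d + 1)) (by omega)
      set x := c R (n - 1 - (d + 1))
      set y := c R (n - 1 - d)
      rcases hstep with hs | hs
      · rw [hs.1] at hd'
        omega
      · right
        rw [show x.1 - 1 = y.1 by omega]
        by_contra hlt
        have hin : (y.1, y.2 - 1) ∈ R := by
          apply hQ
          · rw [show y.2 - 1 + 1 = y.2 by omega]; exact hym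
          · omega
          · rw [mem_sdiff_iff]; omega
        have := hp.ct_inj hin hxm (by unfold ct; simp only; omega)
        have := congrArg Prod.fst this
        simp only at this
        omega
  have hP : ∀ i j, (i, j) ∈ R → i = 0 ∨ j ≤ mu.rowLen (i - 1) := by
    intro i j hij
    obtain ⟨m, hm, e⟩ := hp.exists hij
    have := hP' (n - 1 - m) (by omega)
    rwa [show n - 1 - (n - 1 - m) = m by omega, e] at this
  have hup : ∀ i j, (i + 1, j) ∈ R → (i, j) ∉ mu.cells → (i, j) ∈ R := by
    intro i j hij hmu
    obtain ⟨m, hm, e⟩ := hp.exists hij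
    rw [mem_cells_iff] at hmu
    have h1 := hS m hm
    rw [e] at h1
    simp only at h1
    have h2 := lam.rowLen_anti i (i + 1) (by omega)
    by_cases hmn : m + 1 < n
    · have hm1 := hp.mem hmn
      rcases hp.2 m hmn with hs | hs
      · exfalso
        rw [e] at hs
        rw [← Prod.mk.eta (p := c R (m + 1))] at hm1
        have := hP _ _ hm1
        rw [hs.1] at this
        simp only [Nat.add_sub_cancel] at this
        omega
      · rw [e] at hs
        have : c R (m + 1) = (i, j) := Prod.ext (by simp only at hs ⊢; omega) hs.2
        rwa [this] at hm1
    · exfalso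
      rw [show n - 1 = m by omega, e] at hnorth
      simp only [Nat.add_sub_cancel, mem_sdiff_iff] at hnorth
      omega
  have hleft : ∀ i j, (i, j + 1) ∈ R → (i, j) ∉ mu.cells → (i, j) ∈ R := by
    intro i j hij hmu
    apply hQ i j hij (hP _ _ hij)
    have := hsub hij
    rw [mem_sdiff_iff] at this ⊢
    rw [mem_cells_iff] at hmu
    omega
  let nu : YoungDiagram := ⟨mu.cells ∪ R, by
    apply isLowerSet_of_neighbours
    · intro i j h
      rw [Finset.mem_union] at h ⊢
      by_cases hmu : (i, j) ∈ mu.cells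
      · exact Or.inl hmu
      · rcases h with h | h
        · exact absurd (mu.isLowerSet (a := (i + 1, j)) (b := (i, j)) (by simp) h) hmu
        · exact Or.inr (hup i j h hmu)
    · intro i j h
      rw [Finset.mem_union] at h ⊢
      by_cases hmu : (i, j) ∈ mu.cells
      · exact Or.inl hmu
      · rcases h with h | h
        · exact absurd (mu.isLowerSet (a := (i, j + 1)) (b := (i, j)) (by simp) h) hmu
        · exact Or.inr (hleft i j h hmu)⟩
  have hle : mu ≤ nu := YoungDiagram.cells_subset_iff.1 Finset.subset_union_left
  have hsd : nu.cells \ mu.cells = R := by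
    change (mu.cells ∪ R) \ mu.cells = R
    rw [Finset.union_sdiff_left, Finset.sdiff_eq_self_iff_disjoint]
    exact Finset.disjoint_of_subset_left hsub Finset.sdiff_disjoint
  have hle2 : nu ≤ lam := YoungDiagram.cells_subset_iff.1
    (Finset.union_subset (YoungDiagram.cells_subset_iff.2 h) (hsub.trans Finset.sdiff_subset))
  have hsd2 : lam.cells \ nu.cells = (lam.cells \ mu.cells) \ R := by
    change lam.cells \ (mu.cells ∪ R) = _
    rw [sdiff_sdiff_left]; rfl
  refine ⟨R, hRT, nu, hle, hle2, hsd, ⟨?_, ?_⟩, ?_⟩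
  · rw [hsd2]; exact tiling_erase hT.1 hRT
  · intro R' hR' x hx
    rw [hsd2]
    rcases hT.2 R' (Finset.mem_of_mem_erase hR') x hx with h0 | h0
    · exact Or.inl h0
    · exact Or.inr fun h1 => h0 (Finset.mem_sdiff.1 h1).1
  · intro R' hR'
    have hp' := hc R' hR'
    rw [hp.bot_eq hn, hp'.bot_eq hn]
    by_contra hlt
    push Not at hlt
    have htail : mu.rowLen (c R 0).1 = (c R 0).2 :=
      step_row_tail (lam := nu) (n := n) hn (by rw [hsd]; exact hp)
    have h1 := tiling_subset hT.1 hR' (hp'.mem (m := 0) (by omega))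
    rw [← Prod.mk.eta (p := c R' 0), mem_sdiff_iff] at h1
    have h2 := hmin R' hR'
    have h3 := lam.rowLen_anti ((c R 0).1 + 1) (c R' 0).1 (by omega)
    have h4 := mu.rowLen_anti (c R 0).1 ((c R 0).1 + 1) (by omega)
    have h5 : ((c R 0).1 + 1, (c R 0).2) ∈ lam.cells \ mu.cells := by
      rw [mem_sdiff_iff]
      unfold ct at h2
      omega
    obtain ⟨R2, hR2, hx⟩ := tiling_cover hT.1 h5
    have h6 := ((hc R2 hR2).ct_bounds hx).1
    have h7 := hmin R2 hR2
    unfold ct at h6 h7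
    push_cast at h6
    omega

/-- Every nonempty ribbon tiling of a partition contains a ribbon that can be removed. -/
lemma outer_peel {n : ℕ} (hn : 1 ≤ n) {lam : YoungDiagram} {T : Finset (Finset Cell)}
    (hT : IsTilingOf n lam.cells T) (hne : T.Nonempty) :
    ∃ R ∈ T, ∃ mu : YoungDiagram, mu ≤ lam ∧ lam.cells \ mu.cells = R ∧ mu.cells = lam.cells \ R := by
  choose! c hc using fun R (hR : R ∈ T) => exists_path hn (hT.1 R hR)
  -- the ribbons whose tail lies at the bottom of its column
  set A := T.filter (fun R => lam.rowLen ((c R 0).1 + 1) ≤ (c R 0).2) with hA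
  have hAne : A.Nonempty := by
    obtain ⟨R0, hR0⟩ := hne
    obtain ⟨x, hx, hmin⟩ := lam.cells.exists_min_image ct
      ⟨_, tiling_subset hT hR0 ((hc R0 hR0).mem (m := 0) (by omega))⟩
    obtain ⟨R, hR, hxR⟩ := tiling_cover hT hx
    refine ⟨R, Finset.mem_filter.2 ⟨hR, ?_⟩⟩
    by_contra hlt
    have h1 := hmin ((c R 0).1 + 1, (c R 0).2) (mem_cells_iff.2 (by omega))
    have h2 := ((hc R hR).ct_bounds hxR).1
    unfold ct at h1 h2
    push_cast at h1
    omega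
  obtain ⟨R, hRA, hmax⟩ := A.exists_max_image (fun R => ct (c R 0)) hAne
  obtain ⟨hRT, htail⟩ := Finset.mem_filter.1 hRA
  have hp := hc R hRT
  have hsub := tiling_subset hT hRT
  have hZ : ∀ i j, (i, j) ∈ R → lam.rowLen (i + 1) ≤ j + 1 → (i, j + 1) ∈ lam.cells →
      (i, j + 1) ∈ R := by
    intro i j hij hi hS
    obtain ⟨R', hR', hx⟩ := tiling_cover hT hS
    have hp' := hc R' hR'
    obtain ⟨l, hl, hcl⟩ := hp'.exists hx
    rcases l with _ | l
    · exfalso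
      have h1 := hmax R' (Finset.mem_filter.2 ⟨hR', by rw [hcl]; exact hi⟩)
      have h2 := (hp.ct_bounds hij).1
      rw [hcl] at h1
      unfold ct at h1 h2
      push_cast at h1
      simp only at h1 h2
      omega
    · have hm := hp'.mem (m := l) (by omega)
      have hs := hp'.2 l hl
      rcases hs with hs | hs
      · rw [hcl] at hs
        have e : c R' l = (i, j) := Prod.ext hs.1.symm (by simp only at hs ⊢; omega)
        rw [e] at hm
        rw [tiling_eq hT hRT hR' hij hm]
        exact hx
      · exfalso
        have hm' := tiling_subset hT hR' hm
        rw [hcl] at hs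
        rw [← Prod.mk.eta (p := c R' l), mem_cells_iff] at hm'
        simp only at hs
        rw [hs.1] at hm'
        omega
  have hQ : ∀ m, m < n → lam.rowLen ((c R m).1 + 1) ≤ (c R m).2 + 1 := by
    intro m
    induction m with
    | zero => intro _; omega
    | succ m ih =>
      intro hm
      have hx := ih (by omega)
      have hxm := hp.mem (m := m) (by omega)
      have hym := hp.mem hm
      rcases hp.2 m hm with hs | hs
      · rw [hs.1]; omega
      · rw [← hs.1]
        by_contra hlt
        have hin := hZ (c R m).1 (c R m).2 hxm hx (mem_cells_iff.2 (by omega))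
        have := hp.ct_inj hin hym (by unfold ct; simp only; omega)
        have := congrArg Prod.fst this
        simp only at this
        omega
  have hright : ∀ i j, (i, j) ∈ R → (i, j + 1) ∈ lam.cells → (i, j + 1) ∈ R := by
    intro i j hij hl
    obtain ⟨m, hm, e⟩ := hp.exists hij
    have := hQ m hm
    rw [e] at this
    exact hZ i j hij this hl
  have hdown : ∀ i j, (i, j) ∈ R → (i + 1, j) ∈ lam.cells → (i + 1, j) ∈ R := by
    intro i j hij hl
    obtain ⟨m, hm, e⟩ := hp.exists hij
    rw [mem_cells_iff] at hl
    rcases m with _ | m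
    · rw [e] at htail
      simp only at htail
      omega
    · have h1 := hQ m (by omega)
      have h2 := hp.mem (m := m) (by omega)
      rcases hp.2 m hm with hs | hs
      · rw [e] at hs
        simp only at hs
        rw [← hs.1] at h1
        omega
      · rw [e] at hs
        have : c R m = (i + 1, j) := Prod.ext hs.1 hs.2.symm
        rwa [this] at h2
  let mu : YoungDiagram := ⟨lam.cells \ R, by
    apply isLowerSet_of_neighbours
    · intro i j h
      rw [Finset.mem_sdiff] at h ⊢
      exact ⟨lam.isLowerSet (a := (i + 1, j)) (b := (i, j)) (by simp) h.1,
        fun hr => h.2 (hdown i j hr h.1)⟩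
    · intro i j h
      rw [Finset.mem_sdiff] at h ⊢
      exact ⟨lam.isLowerSet (a := (i, j + 1)) (b := (i, j)) (by simp) h.1,
        fun hr => h.2 (hright i j hr h.1)⟩⟩
  refine ⟨R, hRT, mu, YoungDiagram.cells_subset_iff.1 Finset.sdiff_subset, ?_, rfl⟩
  change lam.cells \ (lam.cells \ R) = R
  rw [Finset.sdiff_sdiff_eq_self hsub]

/-! ### Horizontal strips are encoded by the multiset of their bottom rows -/

lemma step_good {n : ℕ} (hn : 1 ≤ n) {mu lam : YoungDiagram} (h : mu ≤ lam)
    (hR : IsRibbon n (lam.cells \ mu.cells)) (hb : bot (lam.cells \ mu.cells) < n) :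
    Good n lam ↔ Good n mu := by
  obtain ⟨c, hp⟩ := exists_path hn hR
  rw [hp.bot_eq hn] at hb
  exact step_good_iff hn h hp hb

lemma bot_lt {n : ℕ} (hn : 1 ≤ n) {R : Finset Cell} (h : ∀ x ∈ R, x.1 < n) : bot R < n :=
  (Finset.sup_lt_iff (by simpa using Nat.lt_of_lt_of_le Nat.zero_lt_one hn)).2 h

/-- Every multiset of rows in `{0, …, n - 1}` is the multiset of bottom rows of a horizontal strip
over `mu`. The ribbons are added from the lowest bottom row to the highest. -/
lemma strip_exists {n : ℕ} (hn : 1 ≤ n) (k : ℕ) : ∀ (m : Multiset ℕ), m.card = k →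
    (∀ b ∈ m, b < n) → ∀ mu : YoungDiagram, Good n mu → ∃ (lam : YoungDiagram)
      (T : Finset (Finset Cell)), mu ≤ lam ∧ Good n lam ∧
        IsHStripTiling n (lam.cells \ mu.cells) T ∧ T.val.map bot = m := by
  induction k with
  | zero =>
    intro m hm _ mu hg
    rw [Multiset.card_eq_zero] at hm
    subst hm
    refine ⟨mu, ∅, le_rfl, hg, ⟨⟨by simp, by simp, by simp⟩, ?_⟩, by simp⟩
    intro R hR
    simp at hR
  | succ k ih =>
    intro m hm hlt mu hg
    obtain ⟨b, hb, hmax⟩ := m.toFinset.exists_max_image id (by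
      rw [Multiset.toFinset_nonempty]
      rintro rfl
      simp at hm)
    rw [Multiset.mem_toFinset] at hb
    obtain ⟨nu, hle, hR, hbot⟩ := add_exists hn hg (hlt b hb)
    have hgn : Good n nu := (step_good hn hle hR (by rw [hbot]; exact hlt b hb)).2 hg
    obtain ⟨lam, T, hle2, hgl, hT, hTm⟩ := ih (m.erase b)
      (by rw [Multiset.card_erase_of_mem hb, hm]; rfl)
      (fun x hx => hlt x (Multiset.mem_of_mem_erase hx)) nu hgn
    set R := nu.cells \ mu.cells with hRdef
    have hdisj : Disjoint R (lam.cells \ nu.cells) :=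
      Finset.disjoint_of_subset_left Finset.sdiff_subset Finset.disjoint_sdiff
    have hRT := not_mem_of_disjoint hn hT.1 hR hdisj
    have hunion : lam.cells \ mu.cells = R ∪ (lam.cells \ nu.cells) := by
      have h1 := YoungDiagram.cells_subset_iff.2 hle
      have h2 := YoungDiagram.cells_subset_iff.2 hle2
      ext x
      have h3 := @h1 x
      have h4 := @h2 x
      simp only [hRdef, Finset.mem_sdiff, Finset.mem_union]
      tauto
    refine ⟨lam, insert R T, hle.trans hle2, hgl, ⟨?_, ?_⟩, ?_⟩
    · rw [hunion]; exact tiling_insert hT.1 hR hdisj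
    · obtain ⟨c, hp⟩ := exists_path hn hR
      intro R' hR' x hx
      rcases Finset.mem_insert.1 hR' with e | hR'
      · subst e
        rw [hp.topRight_unique hn hx]
        have hh := hp.mem (m := n - 1) (by omega)
        by_cases h0 : (c (n - 1)).1 = 0
        · exact Or.inl h0
        · right
          rw [hunion, Finset.mem_union, not_or]
          constructor
          · intro h
            have := (hp.row_bounds h).1
            simp only at this
            omega
          · intro h
            have h1 := mem_sdiff_iff.1 h
            have h2 := nu.rowLen_anti ((c (n - 1)).1 - 1) (c (n - 1)).1 (by omega)
            rw [hRdef, ← Prod.mk.eta (p := c (n - 1)), mem_sdiff_iff] at hh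
            omega
      · obtain ⟨c', hp'⟩ := exists_path hn (hT.1.1 R' hR')
        have hxe := hp'.topRight_unique hn hx
        rcases hT.2 R' hR' x hx with h0 | h0
        · exact Or.inl h0
        · by_cases h00 : x.1 = 0
          · exact Or.inl h00
          right
          rw [hunion, Finset.mem_union, not_or]
          refine ⟨fun h => ?_, h0⟩
          have h1 := (hp.ct_bounds h).2
          have h2 := hp'.ct_eq (m := n - 1) (by omega)
          have h3 : bot R' ∈ m.erase b := by
            rw [← hTm]; exact Multiset.mem_map_of_mem _ hR'
          have h4 := hmax _ (Multiset.mem_toFinset.2 (Multiset.mem_of_mem_erase h3))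
          simp only [id] at h4
          rw [hp'.bot_eq hn] at h4
          rw [hp.bot_eq hn] at hbot
          have h5 := tiling_subset hT.1 hR' (hp'.mem (m := 0) (by omega))
          rw [← Prod.mk.eta (p := c' 0), mem_sdiff_iff] at h5
          have h6 := nu.rowLen_anti _ _ h4
          have h7 := rowLen_le_of_le hle b
          have h8 := step_row_tail hn hp
          rw [hbot] at h8
          rw [← hxe] at h2
          unfold ct at h1 h2
          simp only at h1
          omega
    · rw [Finset.insert_val_of_notMem hRT, Multiset.map_cons, hTm, hbot, Multiset.cons_erase hb]

lemma map_bot_erase {T : Finset (Finset Cell)} {R : Finset Cell} (hR : R ∈ T) :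
    (T.erase R).val.map bot = (T.val.map bot).erase (bot R) := by
  rw [Finset.erase_val, Multiset.map_erase_of_mem _ _ hR]

lemma eq_of_sdiff_empty {mu lam : YoungDiagram} (h : mu ≤ lam) (he : lam.cells \ mu.cells = ∅) :
    lam = mu :=
  YoungDiagram.ext (Finset.Subset.antisymm (Finset.sdiff_eq_empty_iff_subset.1 he)
    (YoungDiagram.cells_subset_iff.2 h))

/-- A horizontal strip over `mu` is determined by its multiset of bottom rows. -/
lemma strip_unique {n : ℕ} (hn : 1 ≤ n) (k : ℕ) : ∀ (mu lam lam' : YoungDiagram)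
    (T T' : Finset (Finset Cell)), T.card = k → mu ≤ lam → mu ≤ lam' →
    IsHStripTiling n (lam.cells \ mu.cells) T → IsHStripTiling n (lam'.cells \ mu.cells) T' →
    T.val.map bot = T'.val.map bot → lam = lam' ∧ T = T' := by
  induction k with
  | zero =>
    intro mu lam lam' T T' hk hle hle' hT hT' hm
    rw [Finset.card_eq_zero] at hk
    subst hk
    have hT0 : T' = ∅ := by
      have := congrArg Multiset.card hm
      rw [Multiset.card_map, Multiset.card_map] at this
      exact Finset.card_eq_zero.1 this.symm
    subst hT0
    have e1 := hT.1.2.2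
    have e2 := hT'.1.2.2
    rw [Finset.biUnion_empty] at e1 e2
    rw [eq_of_sdiff_empty hle e1.symm, eq_of_sdiff_empty hle' e2.symm]
    exact ⟨rfl, rfl⟩
  | succ k ih =>
    intro mu lam lam' T T' hk hle hle' hT hT' hm
    have hk' : T'.card = k + 1 := by
      have := congrArg Multiset.card hm
      rw [Multiset.card_map, Multiset.card_map] at this
      exact this.symm.trans hk
    obtain ⟨R, hR, nu, h1, h2, h3, h4, h5⟩ :=
      inner_peel hn hle hT (Finset.card_pos.1 (by omega))
    obtain ⟨R', hR', nu', h1', h2', h3', h4', h5'⟩ :=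
      inner_peel hn hle' hT' (Finset.card_pos.1 (by omega))
    have hbot : bot R = bot R' := by
      apply le_antisymm
      · have : bot R ∈ T'.val.map bot := hm ▸ Multiset.mem_map_of_mem _ hR
        obtain ⟨A, hA, e⟩ := Multiset.mem_map.1 this
        rw [← e]; exact h5' A hA
      · have : bot R' ∈ T.val.map bot := hm ▸ Multiset.mem_map_of_mem _ hR'
        obtain ⟨A, hA, e⟩ := Multiset.mem_map.1 this
        rw [← e]; exact h5 A hA
    have hnu : nu = nu' := add_unique hn h1 h1' (by rw [h3]; exact hT.1.1 R hR)
      (by rw [h3']; exact hT'.1.1 R' hR') (by rw [h3, h3', hbot])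
    subst hnu
    have hRR : R = R' := h3.symm.trans h3'
    subst hRR
    obtain ⟨e1, e2⟩ := ih nu lam lam' _ _ (by rw [Finset.card_erase_of_mem hR, hk]; rfl) h2 h2'
      h4 h4' (by rw [map_bot_erase hR, map_bot_erase hR', hm])
    refine ⟨e1, ?_⟩
    have e3 := Finset.insert_erase hR'
    rw [← Finset.insert_erase hR, e2, e3]

/-- Over a good partition, a horizontal strip with rows in `{0, …, n - 1}` leads to a good
partition, and the energy grows by `2 ∑ (2 bot - spin)`. -/
lemma strip_weight {n : ℕ} (hn : 1 ≤ n) (k : ℕ) : ∀ (mu lam : YoungDiagram)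
    (T : Finset (Finset Cell)), T.card = k → mu ≤ lam →
    IsHStripTiling n (lam.cells \ mu.cells) T → Good n mu → (∀ c ∈ lam.cells, c.1 < n) →
    Good n lam ∧ energy n lam = energy n mu + 2 * ∑ R ∈ T, (2 * (bot R : ℤ) - ribbonSpin R) ∧
      Relation.ReflTransGen (RibbonStep n) lam mu := by
  induction k with
  | zero =>
    intro mu lam T hk hle hT hg hrow
    rw [Finset.card_eq_zero] at hk
    subst hk
    have e1 := hT.1.2.2
    rw [Finset.biUnion_empty] at e1
    rw [eq_of_sdiff_empty hle e1.symm]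
    exact ⟨hg, by simp, Relation.ReflTransGen.refl⟩
  | succ k ih =>
    intro mu lam T hk hle hT hg hrow
    obtain ⟨R, hR, nu, h1, h2, h3, h4, h5⟩ :=
      inner_peel hn hle hT (Finset.card_pos.1 (by omega))
    have hRr : IsRibbon n (nu.cells \ mu.cells) := by rw [h3]; exact hT.1.1 R hR
    have hrow' : ∀ c ∈ nu.cells, c.1 < n := fun c hc =>
      hrow c (YoungDiagram.cells_subset_iff.2 h2 hc)
    have hgn : Good n nu := (step_good hn h1 hRr
      (bot_lt hn fun x hx => hrow' x (Finset.mem_sdiff.1 hx).1)).2 hg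
    obtain ⟨i1, i2, i3⟩ := ih nu lam _ (by rw [Finset.card_erase_of_mem hR, hk]; rfl) h2 h4 hgn hrow
    refine ⟨i1, ?_, i3.tail ⟨h1, hRr⟩⟩
    rw [i2, energy_step hn h1 hRr hgn, h3, ← Finset.add_sum_erase _ _ hR]
    ring

/-! ### The maximal spin -/

lemma good_of_core {n : ℕ} (hn : 1 ≤ n) {lam : YoungDiagram} (h : IsNCoreOf n ⊥ lam)
    (hrow : ∀ c ∈ lam.cells, c.1 < n) : Good n lam := by
  obtain ⟨h, -⟩ := h
  induction h using Relation.ReflTransGen.head_induction_on with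
  | refl => exact good_bot
  | head hab _ ih =>
    refine (step_good hn hab.1 hab.2 (bot_lt hn fun x hx => hrow x (Finset.mem_sdiff.1 hx).1)).2
      (ih fun c hc => hrow c (YoungDiagram.cells_subset_iff.2 hab.1 hc))

/-- The sum `∑ (2 bot - spin)` is the same for all ribbon tilings of a good partition. -/
lemma tiling_energy {n : ℕ} (hn : 1 ≤ n) (k : ℕ) : ∀ (lam : YoungDiagram)
    (T : Finset (Finset Cell)), T.card = k → IsTilingOf n lam.cells T → Good n lam →
    energy n lam = energy n ⊥ + 2 * ∑ R ∈ T, (2 * (bot R : ℤ) - ribbonSpin R) := by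
  induction k with
  | zero =>
    intro lam T hk hT _
    rw [Finset.card_eq_zero] at hk
    subst hk
    have : lam = ⊥ := YoungDiagram.ext (by rw [← hT.2.2]; simp)
    subst this
    simp
  | succ k ih =>
    intro lam T hk hT hg
    obtain ⟨R, hR, mu, h1, h2, h3⟩ := outer_peel hn hT (Finset.card_pos.1 (by omega))
    have hRr : IsRibbon n (lam.cells \ mu.cells) := by rw [h2]; exact hT.1 R hR
    have hgm : Good n mu := (step_good hn h1 hRr
      (bot_lt hn fun x hx => hg.1 x (Finset.mem_sdiff.1 hx).1)).1 hg
    have := ih mu (T.erase R) (by rw [Finset.card_erase_of_mem hR, hk]; rfl)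
      (by rw [h3]; exact tiling_erase hT hR) hgm
    rw [energy_step hn h1 hRr hg, this, h2, ← Finset.add_sum_erase _ _ hR]
    ring

/-- A good partition has a tiling in which every ribbon `R` has spin `bot R`. -/
lemma exists_max_tiling {n : ℕ} (hn : 1 ≤ n) (k : ℕ) : ∀ (lam : YoungDiagram), lam.cells.card ≤ k →
    Good n lam → ∃ T, IsTilingOf n lam.cells T ∧ ∀ R ∈ T, ribbonSpin R = bot R := by
  induction k with
  | zero =>
    intro lam hk _
    have : lam.cells = ∅ := Finset.card_eq_zero.1 (by omega)
    exact ⟨∅, ⟨by simp, by simp, by simp [this]⟩, by simp⟩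
  | succ k ih =>
    intro lam hk hg
    by_cases hne : lam = ⊥
    · subst hne
      exact ⟨∅, ⟨by simp, by simp, by simp⟩, by simp⟩
    · obtain ⟨mu, h1, hR, hs⟩ := remove_exists hn hg hne
      have hgm : Good n mu := (step_good hn h1 hR
        (bot_lt hn fun x hx => hg.1 x (Finset.mem_sdiff.1 hx).1)).1 hg
      have hc := Finset.card_sdiff_add_card_eq_card (YoungDiagram.cells_subset_iff.2 h1)
      rw [hR.1] at hc
      obtain ⟨T, hT, hTs⟩ := ih mu (by omega) hgm
      refine ⟨insert (lam.cells \ mu.cells) T, ?_, ?_⟩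
      · have := tiling_insert hT hR Finset.sdiff_disjoint
        rwa [Finset.sdiff_union_of_subset (YoungDiagram.cells_subset_iff.2 h1)] at this
      · intro R' hR'
        rcases Finset.mem_insert.1 hR' with rfl | hmem
        · exact hs
        · exact hTs _ hmem

/-- The maximal spin of a good partition is half of its energy, relative to the empty one. -/
lemma two_maxSpin {n : ℕ} (hn : 1 ≤ n) {lam : YoungDiagram} (hg : Good n lam) :
    2 * (maxSpin n lam.cells : ℤ) = energy n lam - energy n ⊥ := by
  obtain ⟨T, hT, hTs⟩ := exists_max_tiling hn _ lam le_rfl hg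
  have hgr : IsGreatest {m : ℕ | ∃ T, IsTilingOf n lam.cells T ∧ tilingSpin T = m}
      (tilingSpin T) := by
    refine ⟨⟨T, hT, rfl⟩, ?_⟩
    rintro _ ⟨T', hT', rfl⟩
    have e1 := tiling_energy hn _ lam T rfl hT hg
    have e2 := tiling_energy hn _ lam T' rfl hT' hg
    have f1 : ∑ R ∈ T, (2 * (bot R : ℤ) - ribbonSpin R) = (tilingSpin T : ℤ) := by
      unfold tilingSpin
      push_cast
      exact Finset.sum_congr rfl fun R hR => by rw [hTs R hR]; ring
    have f2 : (tilingSpin T' : ℤ) ≤ ∑ R ∈ T', (2 * (bot R : ℤ) - ribbonSpin R) := by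
      unfold tilingSpin
      push_cast
      refine Finset.sum_le_sum fun R hR => ?_
      obtain ⟨c, hp⟩ := exists_path hn (hT'.1 R hR)
      have := hp.spin_le_bot hn
      omega
    omega
  have e1 := tiling_energy hn _ lam T rfl hT hg
  have f1 : ∑ R ∈ T, (2 * (bot R : ℤ) - ribbonSpin R) = (tilingSpin T : ℤ) := by
    unfold tilingSpin
    push_cast
    exact Finset.sum_congr rfl fun R hR => by rw [hTs R hR]; ring
  have : maxSpin n lam.cells = tilingSpin T := hgr.csSup_eq
  rw [this]
  omega

/-! ### Ribbon tableaux and multisets of letters -/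

/-- The bottom row of `R` as an element of `Fin n`; the reduction modulo `n` is vacuous for
ribbons inside the first `n` rows. -/
def botF {n : ℕ} (hn : 1 ≤ n) (R : Finset Cell) : Fin n := ⟨bot R % n, Nat.mod_lt _ hn⟩

/-- The multiset of pairs `(i, b)` with `b` taken from the `i`-th of a family of multisets. -/
def assemble {N : ℕ} {β : Type*} (m : Fin N → Multiset β) : Multiset (Fin N × β) :=
  ∑ i, (m i).map (Prod.mk i)

lemma count_assemble {N : ℕ} {β : Type*} (m : Fin N → Multiset β) (i : Fin N) (b : β) :
    (assemble m).count (i, b) = (m i).count b := by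
  unfold assemble
  rw [Multiset.count_sum', Finset.sum_eq_single i]
  · rw [Multiset.count_map_eq_count' _ _ (Prod.mk_right_injective i)]
  · intro j _ hj
    rw [Multiset.count_eq_zero]
    intro h
    obtain ⟨x, _, e⟩ := Multiset.mem_map.1 h
    exact hj (congrArg Prod.fst e)
  · simp

lemma assemble_injective {N : ℕ} {β : Type*} {m m' : Fin N → Multiset β}
    (h : assemble m = assemble m') : m = m' := by
  funext i
  ext b
  rw [← count_assemble, h, count_assemble]

lemma assemble_surjective {N : ℕ} {β : Type*} (M : Multiset (Fin N × β)) :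
    ∃ m : Fin N → Multiset β, assemble m = M := by
  refine ⟨fun i => (M.filter (fun p => p.1 = i)).map Prod.snd, ?_⟩
  ext ⟨i, b⟩
  rw [count_assemble, Multiset.count_map, Multiset.filter_filter,
    Multiset.count_eq_card_filter_eq]
  congr 1
  apply Multiset.filter_congr
  rintro ⟨j, c⟩ _
  simp only [Prod.mk.injEq]
  constructor
  · rintro ⟨h1, h2⟩; exact ⟨h2.symm, h1⟩
  · rintro ⟨h1, h2⟩; exact ⟨h2, h1.symm⟩

lemma card_assemble {N : ℕ} {β : Type*} (m : Fin N → Multiset β) :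
    (assemble m).card = ∑ i, (m i).card := by
  unfold assemble
  rw [Multiset.card_sum]
  exact Finset.sum_congr rfl fun i _ => Multiset.card_map _ _

lemma telescope {N : ℕ} : ∀ (f : Fin (N + 1) → ℤ) (g : Fin N → ℤ),
    (∀ i, f i.succ = f i.castSucc + g i) → f (Fin.last N) = f 0 + ∑ i, g i := by
  induction N with
  | zero => intro f g _; simp
  | succ N ih =>
    intro f g h
    have h1 := ih (fun i => f i.castSucc) (fun i => g i.castSucc) (fun i => h i.castSucc)
    have h2 := h (Fin.last N)
    rw [Fin.succ_last] at h2
    rw [h2, Fin.sum_univ_castSucc]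
    simp only [Fin.castSucc_zero] at h1
    rw [h1]
    ring

section Tableau
variable {n N : ℕ} {lam : YoungDiagram}

lemma chain_le (T : RibbonTableau n N lam ⊥) (i : Fin (N + 1)) : T.chain i ≤ lam := by
  have hm : Monotone T.chain := Fin.monotone_iff_le_succ.2 T.chain_mono
  have := hm (Fin.le_last i)
  rwa [T.chain_last] at this

lemma chain_row (T : RibbonTableau n N lam ⊥) (hrow : ∀ c ∈ lam.cells, c.1 < n)
    (i : Fin (N + 1)) : ∀ c ∈ (T.chain i).cells, c.1 < n :=
  fun c hc => hrow c (YoungDiagram.cells_subset_iff.2 (chain_le T i) hc)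

lemma chain_good (hn : 1 ≤ n) (T : RibbonTableau n N lam ⊥) (hrow : ∀ c ∈ lam.cells, c.1 < n)
    (i : Fin (N + 1)) :
    Good n (T.chain i) ∧ Relation.ReflTransGen (RibbonStep n) (T.chain i) ⊥ := by
  induction i using Fin.induction with
  | zero => rw [T.chain_zero]; exact ⟨good_bot, Relation.ReflTransGen.refl⟩
  | succ i ih =>
    obtain ⟨h1, -, h3⟩ := strip_weight hn _ _ _ _ rfl (T.chain_mono i) (T.tiling_strip i) ih.1
      (chain_row T hrow i.succ)
    exact ⟨h1, h3.trans ih.2⟩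

lemma tableau_bot_lt (hn : 1 ≤ n) (T : RibbonTableau n N lam ⊥)
    (hrow : ∀ c ∈ lam.cells, c.1 < n) (i : Fin N) {R : Finset Cell} (hR : R ∈ T.tiling i) :
    bot R < n :=
  bot_lt hn fun x hx => chain_row T hrow i.succ x
    (Finset.mem_sdiff.1 (tiling_subset (T.tiling_strip i).1 hR hx)).1

/-- The number of cells of the shape is `n` times the number of ribbons. -/
lemma tableau_card (T : RibbonTableau n N lam ⊥) :
    lam.card = n * ∑ i, (T.tiling i).card := by
  have := telescope (fun i => ((T.chain i).cells.card : ℤ))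
    (fun i => (n : ℤ) * ((T.tiling i).card : ℤ)) (fun i => by
      have h1 := Finset.card_sdiff_add_card_eq_card
        (YoungDiagram.cells_subset_iff.2 (T.chain_mono i))
      rw [tiling_card (T.tiling_strip i).1] at h1
      rw [← h1]
      push_cast
      ring)
  simp only [T.chain_last, T.chain_zero, YoungDiagram.cells_bot, Finset.card_empty] at this
  rw [← Finset.mul_sum] at this
  change lam.cells.card = _
  zify
  rw [this]
  simp

/-- The maximal spin of the shape and the spin of a tableau add up to twice the sum of the
bottom rows of all ribbons. -/
lemma tableau_spin (hn : 1 ≤ n) (T : RibbonTableau n N lam ⊥)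
    (hrow : ∀ c ∈ lam.cells, c.1 < n) :
    maxSpin n lam.cells + T.spin = ∑ i, ∑ R ∈ T.tiling i, 2 * bot R := by
  have h1 := telescope (fun i => energy n (T.chain i))
    (fun i => 2 * ∑ R ∈ T.tiling i, (2 * (bot R : ℤ) - ribbonSpin R)) (fun i =>
      (strip_weight hn _ _ _ _ rfl (T.chain_mono i) (T.tiling_strip i)
        (chain_good hn T hrow _).1 (chain_row T hrow i.succ)).2.1)
  simp only [T.chain_last, T.chain_zero] at h1
  have hg := (chain_good hn T hrow (Fin.last N)).1
  rw [T.chain_last] at hg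
  have h2 := two_maxSpin hn hg
  rw [← Finset.mul_sum] at h1
  simp only [Finset.sum_sub_distrib] at h1
  unfold RibbonTableau.spin tilingSpin
  zify
  omega

/-- The letters of a tableau: the pairs of an entry `i` and the bottom row of a ribbon labelled
`i`. -/
def letters (hn : 1 ≤ n) (T : RibbonTableau n N lam ⊥) : Multiset (Fin N × Fin n) :=
  assemble fun i => (T.tiling i).val.map (botF hn)

lemma card_letters (hn : 1 ≤ n) (T : RibbonTableau n N lam ⊥) {k : ℕ} (hk : lam.card = n * k) :
    (letters hn T).card = k := by
  unfold letters
  rw [card_assemble]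
  rw [tableau_card T] at hk
  simp only [Multiset.card_map]
  exact Nat.eq_of_mul_eq_mul_left hn hk

lemma map_val_botF (hn : 1 ≤ n) {T : Finset (Finset Cell)} (h : ∀ R ∈ T, bot R < n) :
    (T.val.map (botF hn)).map (fun x : Fin n => (x : ℕ)) = T.val.map bot := by
  rw [Multiset.map_map]
  exact Multiset.map_congr rfl fun R hR => Nat.mod_eq_of_lt (h R hR)

lemma letters_injective (hn : 1 ≤ n) {lam' : YoungDiagram} (T : RibbonTableau n N lam ⊥)
    (T' : RibbonTableau n N lam' ⊥) (hrow : ∀ c ∈ lam.cells, c.1 < n)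
    (hrow' : ∀ c ∈ lam'.cells, c.1 < n) (h : letters hn T = letters hn T') :
    T.chain = T'.chain ∧ T.tiling = T'.tiling := by
  have hm : ∀ i, (T.tiling i).val.map bot = (T'.tiling i).val.map bot := by
    intro i
    rw [← map_val_botF hn fun R hR => tableau_bot_lt hn T hrow i hR,
      ← map_val_botF hn fun R hR => tableau_bot_lt hn T' hrow' i hR,
      congrFun (assemble_injective h) i]
  have step : ∀ i : Fin N, T.chain i.castSucc = T'.chain i.castSucc →
      T.chain i.succ = T'.chain i.succ ∧ T.tiling i = T'.tiling i := by
    intro i hi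
    have h1 := T'.chain_mono i
    have h2 := T'.tiling_strip i
    rw [← hi] at h1 h2
    exact strip_unique hn _ _ _ _ _ _ rfl (T.chain_mono i) h1 (T.tiling_strip i) h2 (hm i)
  have hchain : ∀ i, T.chain i = T'.chain i := by
    intro i
    induction i using Fin.induction with
    | zero => rw [T.chain_zero, T'.chain_zero]
    | succ i ih => exact (step i ih).1
  exact ⟨funext hchain, funext fun i => (step i (hchain _)).2⟩

lemma letters_surjective (hn : 1 ≤ n) (M : Multiset (Fin N × Fin n)) :
    ∃ (lam : YoungDiagram) (T : RibbonTableau n N lam ⊥), (∀ c ∈ lam.cells, c.1 < n) ∧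
      letters hn T = M := by
  obtain ⟨m, rfl⟩ := assemble_surjective M
  have hex : ∀ (mu : {mu : YoungDiagram // Good n mu}) (l : Multiset (Fin n)),
      ∃ (p : {mu : YoungDiagram // Good n mu} × Finset (Finset Cell)), mu.1 ≤ p.1.1 ∧
        IsHStripTiling n (p.1.1.cells \ mu.1.cells) p.2 ∧
        p.2.val.map bot = l.map (fun x : Fin n => (x : ℕ)) := by
    rintro ⟨mu, hg⟩ l
    obtain ⟨la, T, h1, h2, h3, h4⟩ := strip_exists hn _ (l.map fun x : Fin n => (x : ℕ)) rfl
      (fun b hb => by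
        obtain ⟨x, _, rfl⟩ := Multiset.mem_map.1 hb
        exact x.2) mu hg
    exact ⟨⟨⟨la, h2⟩, T⟩, h1, h3, h4⟩
  choose next hnext using hex
  let mm : ℕ → Multiset (Fin n) := fun i => if h : i < N then m ⟨i, h⟩ else 0
  let ch : ℕ → {mu : YoungDiagram // Good n mu} := fun i =>
    Nat.rec ⟨⊥, good_bot⟩ (fun i mu => (next mu (mm i)).1) i
  let T : RibbonTableau n N (ch N).1 ⊥ :=
    { chain := fun i => (ch i).1
      chain_zero := rfl
      chain_last := rfl
      chain_mono := fun i => (hnext (ch i) (mm i)).1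
      tiling := fun i => (next (ch i) (mm i)).2
      tiling_strip := fun i => (hnext (ch i) (mm i)).2.1 }
  refine ⟨(ch N).1, T, (ch N).2.1, ?_⟩
  unfold letters
  congr 1
  funext i
  apply Multiset.map_injective (f := fun x : Fin n => (x : ℕ)) Fin.val_injective
  rw [map_val_botF hn fun R hR => tableau_bot_lt hn T (ch N).2.1 i hR]
  refine (hnext (ch i) (mm i)).2.2.trans ?_
  simp [mm]

/-- The weight of a tableau, corrected by the maximal spin of its shape, is the product of the
letters of the alphabet indexed by its multiset of letters. -/
lemma letters_weight (hn : 1 ≤ n) (T : RibbonTableau n N lam ⊥)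
    (hrow : ∀ c ∈ lam.cells, c.1 < n) :
    MvPolynomial.C ((Polynomial.X : Polynomial ℤ) ^ maxSpin n lam.cells) * tableauTerm T =
      ((letters hn T).map (alphabetVal n N)).prod := by
  have h1 : ∀ i, (((T.tiling i).val.map (botF hn)).map (Prod.mk i)).map (alphabetVal n N) =
      (T.tiling i).val.map fun R => MvPolynomial.C ((Polynomial.X : Polynomial ℤ) ^ (2 * bot R)) *
        MvPolynomial.X i := by
    intro i
    rw [Multiset.map_map, Multiset.map_map]
    refine Multiset.map_congr rfl fun R hR => ?_
    have : bot R % n = bot R := Nat.mod_eq_of_lt (tableau_bot_lt hn T hrow i hR)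
    simp only [Function.comp, alphabetVal, botF, this]
  have h2 : (letters hn T).map (alphabetVal n N) =
      ∑ i, (((T.tiling i).val.map (botF hn)).map (Prod.mk i)).map (alphabetVal n N) := by
    unfold letters assemble
    exact map_sum (Multiset.mapAddMonoidHom (alphabetVal n N)) _ _
  rw [h2, Multiset.prod_sum]
  simp only [h1]
  have h3 : ∀ i, ((T.tiling i).val.map fun R =>
      MvPolynomial.C ((Polynomial.X : Polynomial ℤ) ^ (2 * bot R)) *
        (MvPolynomial.X i : MvPolynomial (Fin N) (Polynomial ℤ))).prod =
      MvPolynomial.C ((Polynomial.X : Polynomial ℤ) ^ (∑ R ∈ T.tiling i, 2 * bot R)) *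
        MvPolynomial.X i ^ (T.tiling i).card := by
    intro i
    change ∏ R ∈ T.tiling i, _ = _
    rw [Finset.prod_mul_distrib, Finset.prod_const, ← map_prod, Finset.prod_pow_eq_pow_sum]
  simp only [h3]
  rw [Finset.prod_mul_distrib, ← map_prod, Finset.prod_pow_eq_pow_sum, ← tableau_spin hn T hrow]
  unfold tableauTerm
  rw [← mul_assoc, ← map_mul, ← pow_add]

end Tableau

lemma bot_isCore {n N : ℕ} (hn : 1 ≤ n) {lam : YoungDiagram} (T : RibbonTableau n N lam ⊥)
    (hrow : ∀ c ∈ lam.cells, c.1 < n) : IsNCoreOf n ⊥ lam := by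
  have h := (chain_good hn T hrow (Fin.last N)).2
  rw [T.chain_last] at h
  refine ⟨h, fun mu hmu => ?_⟩
  have := hmu.2.1
  simp at this
  omega

lemma finite_shapes (n k : ℕ) : {lam : YoungDiagram | lam.card = n * k ∧ IsNCoreOf n ⊥ lam ∧
    ∀ c ∈ lam.cells, c.1 < n}.Finite := by
  apply Set.Finite.of_finite_image (f := YoungDiagram.cells)
  · apply Set.Finite.subset (Finset.finite_toSet
      (Finset.range n ×ˢ Finset.range (n * k)).powerset)
    rintro _ ⟨lam, ⟨h1, -, h2⟩, rfl⟩
    rw [Finset.mem_coe, Finset.mem_powerset]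
    rintro ⟨i, j⟩ hij
    rw [Finset.mem_product, Finset.mem_range, Finset.mem_range]
    refine ⟨h2 _ hij, ?_⟩
    rw [mem_cells_iff, YoungDiagram.rowLen_eq_card] at hij
    have : (lam.row i).card ≤ lam.cells.card := Finset.card_le_card (Finset.filter_subset _ _)
    change lam.cells.card = _ at h1
    simp only
    omega
  · intro a _ b _ h
    exact YoungDiagram.ext h

end RibbonProof

open RibbonProof

/-- `h_k(A_q(x)) = Σ_λ q^{mspin(λ)} 𝒢_λ(x;q)`, summed over partitions `λ`
of `nk` with empty `n`-core and at most `n` rows. -/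
theorem hAlph_eq_sum_mspin_G (n k N : ℕ) (hn : 1 ≤ n) (hk : 1 ≤ k) (hN : 1 ≤ N) :
    hPoly k (alphabetVal n N) =
      ∑ᶠ lam ∈ {lam : YoungDiagram | lam.card = n * k ∧ IsNCoreOf n ⊥ lam ∧
          ∀ c ∈ lam.cells, c.1 < n},
        MvPolynomial.C ((Polynomial.X : Polynomial ℤ) ^ maxSpin n lam.cells) *
          ribbonFn n N lam ⊥ := by
  set S := {lam : YoungDiagram | lam.card = n * k ∧ IsNCoreOf n ⊥ lam ∧
    ∀ c ∈ lam.cells, c.1 < n} with hS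
  let Φ : (Σ lam : S, RibbonTableau n N lam.1 ⊥) → Sym (Fin N × Fin n) k :=
    fun p => ⟨letters hn p.2, card_letters hn p.2 p.1.2.1⟩
  have hinj : Function.Injective Φ := by
    rintro ⟨⟨lam, hl⟩, T⟩ ⟨⟨lam', hl'⟩, T'⟩ h
    obtain ⟨h1, h2⟩ := letters_injective hn T T' hl.2.2 hl'.2.2 (congrArg Subtype.val h)
    have : lam = lam' := by
      have e1 : _ = lam := T.chain_last
      have e2 : _ = lam' := T'.chain_last
      rw [← e1, ← e2, h1]
    subst this
    cases T
    cases T'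
    simp only at h1 h2
    subst h1 h2
    rfl
  have hsurj : Function.Surjective Φ := by
    rintro ⟨M, hM⟩
    obtain ⟨lam, T, hrow, rfl⟩ := letters_surjective hn M
    have hcard : lam.card = n * k := by
      rw [tableau_card T, ← hM, letters, card_assemble]
      simp only [Multiset.card_map]
      rfl
    exact ⟨⟨⟨lam, hcard, bot_isCore hn T hrow, hrow⟩, T⟩, rfl⟩
  have hfinS : Finite S := finite_shapes n k
  have hfinX : Finite (Σ lam : S, RibbonTableau n N lam.1 ⊥) := Finite.of_injective Φ hinj
  have hfin : ∀ lam : S, Finite (RibbonTableau n N lam.1 ⊥) := fun lam =>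
    Finite.of_injective (fun T => (⟨lam, T⟩ : Σ lam : S, RibbonTableau n N lam.1 ⊥))
      fun T T' h => by simpa using h
  have := Fintype.ofFinite S
  have := fun lam : S => Fintype.ofFinite (RibbonTableau n N lam.1 ⊥)
  rw [← finsum_set_coe_eq_finsum_mem, finsum_eq_sum_of_fintype]
  simp only [ribbonFn, finsum_eq_sum_of_fintype, Finset.mul_sum]
  rw [← Fintype.sum_sigma']
  symm
  exact Fintype.sum_bijective Φ ⟨hinj, hsurj⟩ _ _ fun p => letters_weight hn p.2 p.1.2.2.2
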